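/- For every i ≥ 0, dim_k Tor_i^{A ⊗_k A}(k, A) = Σ_{r,m ≥ 0 with r+2m=i} binom(n, r)·binom(s+m−1, m); equivalently, the Hilbert series Σ_{i≥0} dim_k Tor_i^{A⊗_k A}(k,A)·t^i of the Hochschild homology of A with coefficients in k equals (1+t)^n / (1−t²)^s. -/

import Mathlib

/-!
**Statement 13**: let `A = k[x_1, …, x_n]/(m_1, …, m_s)` where `m_1, …, m_s` are
pairwise coprime monomials of degree `≥ 2` (a complete intersection of monomials).
Then `dim_k Tor_i^{A ⊗ A}(k, A) = ∑_{r+2m=i} binom(n,r)·binom(s+m-1,m)`; equivalently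
the Hilbert series of the Hochschild homology of `A` with coefficients in `k` is
`(1+t)^n / (1-t²)^s`.

We realize `Tor_i^{A ⊗ A}(k, A)` concretely as the `i`-th homology of the complex
`k ⊗_{A ⊗ A} C`, where `C` (`C_i = A^{⊗(i+2)}`) is the acyclic Hochschild complex,
a free `A ⊗ A`-resolution of `A`; this complex has terms `A^{⊗ i}` and the
differential `hDelta` below, built from the augmentation `ε : A → k`, `x_i ↦ 0`.
-/
open TensorProduct

noncomputable section

section HochschildHomology

variable (k : Type) [Field k] (A : Type) [Ring A] [Algebra k A]
variable (ε : A →ₐ[k] k)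

/-- The terms `A^{⊗ i}` of the complex `k ⊗_{A ⊗ A^op} C` obtained from the acyclic
Hochschild complex `C` (the free `A ⊗ A^op`-resolution `C_i = A^{⊗ (i+2)}` of `A`)
by tensoring with `k` over `A ⊗ A^op`; its homology computes
`Tor^{A ⊗ A^op}(k, A)`, the Hochschild homology of `A` with coefficients in `k`. -/
def hW : ℕ → ModuleCat k
  | 0 => ModuleCat.of k k
  | n + 1 => ModuleCat.of k (A ⊗[k] (hW n))

/-- Applying the augmentation `ε` to the leftmost tensor factor. -/
def hEps (n : ℕ) : (A ⊗[k] (hW k A n : Type)) →ₗ[k] (hW k A n : Type) :=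
  (TensorProduct.lid k (hW k A n : Type)).toLinearMap.comp
    (TensorProduct.map ε.toLinearMap LinearMap.id)

/-- The differential
`δ(a₁ ⊗ ⋯ ⊗ a_i) = ε(a₁)·(a₂ ⊗ ⋯ ⊗ a_i)
  + ∑_{j=1}^{i-1} (-1)^j a₁ ⊗ ⋯ ⊗ a_j a_{j+1} ⊗ ⋯ ⊗ a_i
  + (-1)^i ε(a_i)·(a₁ ⊗ ⋯ ⊗ a_{i-1})`
of the complex computing the Hochschild homology of `A` with coefficients in `k`,
defined by the recursion `δ(a ⊗ x) = ε(a)·x - (a·x) - a ⊗ δ(x) + a ⊗ (ε·x)`. -/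
def hDelta : ∀ n, (hW k A (n + 1) : Type) →ₗ[k] (hW k A n : Type)
  | 0 => 0
  | n + 1 =>
      (fun (f g h e : (hW k A (n + 2) : Type) →ₗ[k] (hW k A (n + 1) : Type)) =>
          f - g - h + e)
        (hEps k A ε (n + 1))
        ((TensorProduct.map (LinearMap.mul' k A) LinearMap.id).comp
          (TensorProduct.assoc k A A (hW k A n)).symm.toLinearMap)
        (TensorProduct.map LinearMap.id (hDelta n))
        (TensorProduct.map LinearMap.id (hEps k A ε n))

/-- The homology of the above complex: `H 0 = k / im(δ_1)` and for `i ≥ 1`,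
`H i = ker(δ_i) / im(δ_{i+1})`.  By the standard theory of the Hochschild
resolution, `H i ≅ Tor_i^{A ⊗ A^op}(k, A) = HH_i(A, k)`; we use this complex as
the definition of these Tor groups. -/
def hH : ℕ → ModuleCat k
  | 0 => ModuleCat.of k ((hW k A 0 : Type) ⧸ LinearMap.range (hDelta k A ε 0))
  | i + 1 => ModuleCat.of k
      ((LinearMap.ker (hDelta k A ε i)) ⧸
        (Submodule.comap (LinearMap.ker (hDelta k A ε i)).subtype
          (LinearMap.range (hDelta k A ε (i + 1)))))

end HochschildHomology

section CompleteIntersection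

variable (k : Type) [Field k] (n s : ℕ) (α : Fin s → (Fin n →₀ ℕ))

/-- The ideal generated by the monomials `m_j = x^{α j}`, `j = 1, …, s`. -/
def ciIdeal : Ideal (MvPolynomial (Fin n) k) :=
  Ideal.span (Set.range fun j => MvPolynomial.monomial (α j) (1 : k))

/-- The quotient `A = k[x_1, …, x_n] / (m_1, …, m_s)`. -/
abbrev CIQuot := MvPolynomial (Fin n) k ⧸ ciIdeal k n s α

/-- The augmentation `A → k` sending each `x_i` to `0` (well defined because each
monomial `m_j` has degree `≥ 2`, hence in particular is not constant). -/
def ciAug (hdeg : ∀ j, 2 ≤ (α j).sum fun _ e => e) : CIQuot k n s α →ₐ[k] k :=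
  Ideal.Quotient.liftₐ (ciIdeal k n s α)
    (MvPolynomial.aeval fun _ : Fin n => (0 : k))
    (by
      intro a ha
      have hle : ciIdeal k n s α ≤
          RingHom.ker (MvPolynomial.aeval fun _ : Fin n => (0 : k)).toRingHom := by
        rw [ciIdeal, Ideal.span_le]
        rintro _ ⟨j, rfl⟩
        simp only [SetLike.mem_coe, RingHom.mem_ker, AlgHom.toRingHom_eq_coe,
          RingHom.coe_coe]
        have hne : ∃ i, (α j) i ≠ 0 := by
          by_contra hcon
          push_neg at hcon
          have h0 : α j = 0 := by
            ext i; simp [hcon i]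
          have h2 := hdeg j
          rw [h0] at h2
          simp at h2
        obtain ⟨i, hi⟩ := hne
        rw [MvPolynomial.aeval_monomial, Finsupp.prod]
        rw [Finset.prod_eq_zero (Finsupp.mem_support_iff.mpr hi)
          (by simp [zero_pow hi])]
        simp
      exact RingHom.mem_ker.mp (hle ha))

end CompleteIntersection

/-!
Tensoring the bar resolution of the `A`-module `k` down to `k` gives exactly the Hochschild complex
`(A^{⊗ •}, δ)`, so the homology to be computed is `Tor^A(k, k)`. A complete intersection
`A = R / (f_j)` with `f_j = ∑ x_i c_{ji}` in the square of the ideal of the variables has an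
explicit minimal resolution of `k`, due to Tate: the exterior algebra on `e_i` in degree one
tensored with the divided power algebra on `y_j` in degree two, with `d e_i = x_i` and
`d y_j = ∑ c_{ji} e_i`. Its exactness is obtained over `R`, where the differential squares to
`∑ f_j ∂/∂y_j`, by adjoining the `y_j` one at a time modulo the corresponding `f_j`, starting from
the Koszul complex of `x`. By minimality the Betti numbers count the basis elements `e_F y^(a)`.
-/

namespace MonomialCI

open CategoryTheory

section Resolutions

universe u

variable {A : Type u} [CommRing A] {Z : Type u} [AddCommGroup Z] [Module A Z]
  {X : ℕ → Type u} [∀ i, AddCommGroup (X i)] [∀ i, Module A (X i)]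

lemma ofHom_comp_ofHom_eq_zero {M N P : Type u} [AddCommGroup M] [AddCommGroup N]
    [AddCommGroup P] [Module A M] [Module A N] [Module A P] {f : M →ₗ[A] N} {g : N →ₗ[A] P}
    (h : g ∘ₗ f = 0) : ModuleCat.ofHom f ≫ ModuleCat.ofHom g = 0 := by
  rw [← ModuleCat.ofHom_comp, h, ModuleCat.ofHom_zero]

/-- The chain complex of `A`-modules with terms `X i` and differentials `d i`. -/
def chainComplexOf (d : ∀ i, X (i + 1) →ₗ[A] X i) (h : ∀ i, d i ∘ₗ d (i + 1) = 0) :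
    ChainComplex (ModuleCat.{u} A) ℕ :=
  ChainComplex.of (fun i => ModuleCat.of A (X i)) (fun i => ModuleCat.ofHom (d i))
    fun i => ofHom_comp_ofHom_eq_zero (h i)

lemma chainComplexOf_d (d : ∀ i, X (i + 1) →ₗ[A] X i) (h : ∀ i, d i ∘ₗ d (i + 1) = 0) (i : ℕ) :
    (chainComplexOf d h).d (i + 1) i = ModuleCat.ofHom (d i) :=
  ChainComplex.of_d (fun i => ModuleCat.of A (X i)) (fun i => ModuleCat.ofHom (d i)) i

lemma chainComplexOf_exactAt {d : ∀ i, X (i + 1) →ₗ[A] X i} (h : ∀ i, d i ∘ₗ d (i + 1) = 0)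
    {i : ℕ} (hi : Function.Exact (d (i + 1)) (d i)) : (chainComplexOf d h).ExactAt (i + 1) := by
  rw [HomologicalComplex.exactAt_iff' _ (i + 2) (i + 1) i (by simp) (by simp),
    ShortComplex.ShortExact.moduleCat_exact_iff_function_exact]
  change Function.Exact ((chainComplexOf d h).d (i + 2) (i + 1)) ((chainComplexOf d h).d (i + 1) i)
  rwa [chainComplexOf_d, chainComplexOf_d]

/-- An exact sequence `⋯ → X 1 → X 0 → Z → 0` with projective terms `X i`, as a projective
resolution of `Z`. -/
def projectiveResolutionOfExact [∀ i, Module.Projective A (X i)]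
    (d : ∀ i, X (i + 1) →ₗ[A] X i) (π : X 0 →ₗ[A] Z) (hπ : Function.Surjective π)
    (h₀ : Function.Exact (d 0) π) (h : ∀ i, Function.Exact (d (i + 1)) (d i)) :
    ProjectiveResolution (ModuleCat.of A Z) where
  complex := chainComplexOf d fun i => (h i).linearMap_comp_eq_zero
  projective i := (IsProjective.iff_projective (X i)).1 inferInstance
  π := (ChainComplex.toSingle₀Equiv _ _).symm ⟨ModuleCat.ofHom π, by
    rw [chainComplexOf_d]; exact ofHom_comp_ofHom_eq_zero h₀.linearMap_comp_eq_zero⟩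
  quasiIso := ⟨fun
    | 0 => by
      rw [ChainComplex.quasiIsoAt₀_iff, ShortComplex.quasiIso_iff_of_zeros' _ rfl rfl rfl]
      let S : ShortComplex (ModuleCat A) := .mk (ModuleCat.ofHom (d 0)) (ModuleCat.ofHom π)
        (ofHom_comp_ofHom_eq_zero h₀.linearMap_comp_eq_zero)
      have hS : S.Exact ∧ Epi S.g :=
        ⟨(ShortComplex.ShortExact.moduleCat_exact_iff_function_exact S).2 h₀,
          (ModuleCat.epi_iff_surjective _).2 hπ⟩
      refine (ShortComplex.exact_and_epi_g_iff_of_iso (S₂ := S)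
        (ShortComplex.isoMk (Iso.refl _) (Iso.refl _) (Iso.refl _) ?_ ?_)).2 hS
      · have hd := chainComplexOf_d d (fun i => (h i).linearMap_comp_eq_zero) 0
        exact (Category.id_comp _).trans (hd.symm.trans (Category.comp_id _).symm)
      · exact (Category.id_comp _).trans (Category.comp_id _).symm
    | i + 1 => by
      rw [quasiIsoAt_iff_exactAt' _ _ (ChainComplex.exactAt_succ_single_obj _ _)]
      exact chainComplexOf_exactAt _ (h i)⟩

lemma projectiveResolutionOfExact_d [∀ i, Module.Projective A (X i)]
    (d : ∀ i, X (i + 1) →ₗ[A] X i) (π : X 0 →ₗ[A] Z) (hπ : Function.Surjective π)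
    (h₀ : Function.Exact (d 0) π) (h : ∀ i, Function.Exact (d (i + 1)) (d i)) (i : ℕ) :
    (projectiveResolutionOfExact d π hπ h₀ h).complex.d (i + 1) i = ModuleCat.ofHom (d i) :=
  chainComplexOf_d d (fun i => (h i).linearMap_comp_eq_zero) i

variable {C D : Type*} [Category* C] [Category* D] [Abelian C] [Abelian D]

lemma map_d_eq_zero (F : C ⥤ D) [F.Additive] (K : ChainComplex C ℕ)
    (h : ∀ i, F.map (K.d (i + 1) i) = 0) (i j : ℕ) : F.map (K.d i j) = 0 := by
  by_cases hij : j + 1 = i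
  · exact hij ▸ h j
  · rw [K.shape i j hij, F.map_zero]

/-- The left derived functors of `F` are computed by the terms of a resolution whose differentials
are all killed by `F`. -/
def leftDerivedObjIsoOfMapDEqZero [HasProjectiveResolutions C] (F : C ⥤ D) [F.Additive]
    {Z : C} (P : ProjectiveResolution Z) (h : ∀ i, F.map (P.complex.d (i + 1) i) = 0) (i : ℕ) :
    (F.leftDerived i).obj Z ≅ F.obj (P.complex.X i) :=
  P.isoLeftDerivedObj F i ≪≫
    (ShortComplex.HomologyData.ofZeros (((F.mapHomologicalComplex _).obj P.complex).sc i)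
      (map_d_eq_zero F _ h _ _) (map_d_eq_zero F _ h _ _)).left.homologyIso

end Resolutions

section BaseChange

universe u

variable (A k : Type u) [CommRing A] [CommRing k] [Algebra A k]

/-- Base change along `A → k`, as a functor from `A`-modules to `k`-modules. -/
def baseChangeFunctor : ModuleCat.{u} A ⥤ ModuleCat.{u} k where
  obj M := ModuleCat.of k (k ⊗[A] M)
  map f := ModuleCat.ofHom (f.hom.baseChange k)
  map_id M := by rw [ModuleCat.hom_id, LinearMap.baseChange_id]; rfl
  map_comp f g := by rw [ModuleCat.hom_comp, LinearMap.baseChange_comp]; rfl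

instance : (baseChangeFunctor A k).Additive where
  map_add {_ _ f g} := by
    change ModuleCat.ofHom ((f + g).hom.baseChange k) = _
    rw [ModuleCat.hom_add, LinearMap.baseChange_add]; rfl

variable {A}

lemma baseChange_eq_zero_of_forall_algebraMap_eq_zero {M κ : Type*} [AddCommGroup M] [Module A M]
    [Finite κ] {f : M →ₗ[A] (κ → A)} (hf : ∀ z p, algebraMap A k (f z p) = 0) :
    f.baseChange k = 0 := by
  classical
  have := Fintype.ofFinite κ
  ext z
  change (1 : k) ⊗ₜ[A] f z = 0
  rw [pi_eq_sum_univ (f z), tmul_sum]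
  refine Finset.sum_eq_zero fun p _ => ?_
  rw [← smul_tmul, Algebra.smul_def, hf, zero_mul, zero_tmul]

theorem rank_leftDerived_baseChangeFunctor_of_minimal [Nontrivial k] {Z : Type u} [AddCommGroup Z]
    [Module A Z] {ι : ℕ → Type u} [∀ i, Finite (ι i)]
    {d : ∀ i, (ι (i + 1) → A) →ₗ[A] (ι i → A)} {π : (ι 0 → A) →ₗ[A] Z}
    (hπ : Function.Surjective π) (h₀ : Function.Exact (d 0) π)
    (h : ∀ i, Function.Exact (d (i + 1)) (d i))
    (hmin : ∀ i z p, algebraMap A k (d i z p) = 0) (i : ℕ) :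
    Module.rank k (((baseChangeFunctor A k).leftDerived i).obj (ModuleCat.of A Z)) =
      Nat.card (ι i) := by
  classical
  have := Fintype.ofFinite (ι i)
  let P := projectiveResolutionOfExact (X := fun i => ι i → A) d π hπ h₀ h
  have hP (i : ℕ) : (baseChangeFunctor A k).map (P.complex.d (i + 1) i) = 0 := by
    exact (congrArg _ (projectiveResolutionOfExact_d (X := fun i => ι i → A) d π hπ h₀ h i)).trans
      (ModuleCat.hom_ext (baseChange_eq_zero_of_forall_algebraMap_eq_zero k (hmin i)))
  rw [(leftDerivedObjIsoOfMapDEqZero (baseChangeFunctor A k) P hP i).toLinearEquiv.rank_eq]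
  change Module.rank k (k ⊗[A] (ι i → A)) = _
  rw [(piScalarRight A k k (ι i)).rank_eq, rank_fun', Nat.card_eq_fintype_card]

end BaseChange

section Bar

variable {k : Type} [Field k] {A : Type} [CommRing A] [Algebra k A] (ε : A →ₐ[k] k)

variable (k A) in
/-- The terms `A ⊗ A^{⊗ i}` of the bar resolution of `k` over `A`. -/
abbrev BarTerm (i : ℕ) : Type := A ⊗[k] (hW k A i : Type)

variable (k A) in
/-- The identification `A ⊗ A^{⊗ i} = A^{⊗ (i + 1)}`, which holds by definition. -/
def barTermEquiv (i : ℕ) : BarTerm k A i ≃ₗ[k] (hW k A (i + 1) : Type) :=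
  LinearEquiv.refl k (BarTerm k A i)

variable (k A) in
/-- The contracting homotopy `y ↦ 1 ⊗ y` of the bar resolution. -/
def barHomotopy (i : ℕ) : BarTerm k A i →ₗ[k] BarTerm k A (i + 1) :=
  TensorProduct.mk k A (hW k A (i + 1)) 1 ∘ₗ (barTermEquiv k A i).toLinearMap

@[elab_as_elim]
lemma BarTerm.induction_on {i : ℕ} {p : BarTerm k A (i + 1) → Prop} (z : BarTerm k A (i + 1))
    (zero : p 0) (smul_barHomotopy : ∀ (a : A) y, p (a • barHomotopy k A i y))
    (add : ∀ x y, p x → p y → p (x + y)) : p z := by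
  refine TensorProduct.induction_on z zero (fun a y => ?_) add
  simpa [barHomotopy, TensorProduct.smul_tmul'] using
    smul_barHomotopy a ((barTermEquiv k A i).symm y)

lemma hEps_tmul (i : ℕ) (a : A) (x : (hW k A i : Type)) :
    hEps k A ε i (a ⊗ₜ[k] x) = ε a • x := by
  simp [hEps]

lemma hEps_smul (i : ℕ) (a : A) (y : BarTerm k A i) :
    hEps k A ε i (a • y) = ε a • hEps k A ε i y := by
  induction y using TensorProduct.induction_on with
  | zero => simp
  | tmul b x => simp [hEps_tmul, TensorProduct.smul_tmul', smul_smul]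
  | add x y hx hy => simp [hx, hy]

lemma hEps_barHomotopy (i : ℕ) (y : BarTerm k A i) :
    hEps k A ε (i + 1) (barHomotopy k A i y) = barTermEquiv k A i y := by
  simp [barHomotopy, hEps_tmul]

/-- The bar differential `a₀ ⊗ ⋯ ⊗ a_i ↦ ∑ ± a₀ ⊗ ⋯ ⊗ a_j a_{j+1} ⊗ ⋯ ± ε(a_i) a₀ ⊗ ⋯ ⊗ a_{i-1}`,
obtained from `hDelta` by removing the term in which `ε` is applied to `a₀` and changing the
sign. -/
def barD (i : ℕ) : BarTerm k A i →ₗ[k] (hW k A i : Type) :=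
  hEps k A ε i - hDelta k A ε i ∘ₗ (barTermEquiv k A i).toLinearMap

lemma hDelta_barTermEquiv (i : ℕ) (y : BarTerm k A i) :
    hDelta k A ε i (barTermEquiv k A i y) = hEps k A ε i y - barD ε i y :=
  (sub_sub_cancel _ _).symm

lemma barD_zero (y : BarTerm k A 0) : barD ε 0 y = hEps k A ε 0 y :=
  sub_zero _

/-- The bar differential in positive degrees, which is `A`-linear and therefore determined by the
homotopy relation. -/
def barDiff (i : ℕ) : BarTerm k A (i + 1) →ₗ[A] BarTerm k A i :=
  LinearMap.liftBaseChange A <|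
    (LinearMap.id - TensorProduct.mk k A (hW k A i) 1 ∘ₗ barD ε i) ∘ₗ
      (barTermEquiv k A i).symm.toLinearMap

lemma barDiff_barHomotopy (i : ℕ) (y : BarTerm k A i) :
    barDiff ε i (barHomotopy k A i y) = y - 1 ⊗ₜ[k] barD ε i y := by
  simp [barDiff, barHomotopy]

lemma mul'_assoc_symm_tmul (i : ℕ) (a : A) (y : BarTerm k A i) :
    TensorProduct.map (LinearMap.mul' k A) LinearMap.id
      ((TensorProduct.assoc k A A (hW k A i)).symm (a ⊗ₜ[k] y)) = a • y := by
  induction y using TensorProduct.induction_on with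
  | zero => simp
  | tmul b x => simp [TensorProduct.smul_tmul']
  | add x y hx hy => simp only [TensorProduct.tmul_add, map_add, hx, hy, smul_add]

lemma barD_succ (i : ℕ) (z : BarTerm k A (i + 1)) :
    barD ε (i + 1) z = barTermEquiv k A i (barDiff ε i z) := by
  induction z using BarTerm.induction_on with
  | zero => simp
  | add x y hx hy => simp only [map_add, hx, hy]
  | smul_barHomotopy a y =>
    have hz : a • barHomotopy k A i y = a ⊗ₜ[k] barTermEquiv k A i y := by
      simp [barHomotopy, TensorProduct.smul_tmul']
    have hδ : hDelta k A ε (i + 1) (barTermEquiv k A (i + 1) (a ⊗ₜ[k] barTermEquiv k A i y)) =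
        hEps k A ε (i + 1) (a ⊗ₜ[k] barTermEquiv k A i y) - barTermEquiv k A i (a • y) -
          barTermEquiv k A i (a ⊗ₜ[k] hDelta k A ε i (barTermEquiv k A i y)) +
          barTermEquiv k A i (a ⊗ₜ[k] hEps k A ε i y) := by
      rw [← mul'_assoc_symm_tmul]; rfl
    rw [hz, barD, LinearMap.sub_apply, LinearMap.comp_apply, LinearEquiv.coe_coe, hδ,
      hDelta_barTermEquiv, ← hz, map_smul (barDiff ε i), barDiff_barHomotopy, smul_sub,
      TensorProduct.smul_tmul', smul_eq_mul, mul_one, TensorProduct.tmul_sub, map_sub, map_sub]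
    abel

lemma hEps_barDiff (i : ℕ) (z : BarTerm k A (i + 1)) :
    hEps k A ε i (barDiff ε i z) = hDelta k A ε i (hEps k A ε (i + 1) z) := by
  induction z using BarTerm.induction_on with
  | zero => simp
  | add x y hx hy => simp only [map_add, hx, hy]
  | smul_barHomotopy a y =>
    rw [map_smul, hEps_smul, hEps_smul, map_smul, barDiff_barHomotopy, hEps_barHomotopy,
      hDelta_barTermEquiv, map_sub, hEps_tmul, map_one, one_smul]

lemma barDiff_barHomotopy_succ (i : ℕ) (y : BarTerm k A (i + 1)) :
    barDiff ε (i + 1) (barHomotopy k A (i + 1) y) = y - barHomotopy k A i (barDiff ε i y) := by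
  rw [barDiff_barHomotopy, barD_succ]; rfl

lemma barD_barDiff (i : ℕ) (z : BarTerm k A (i + 1)) : barD ε i (barDiff ε i z) = 0 := by
  induction i with
  | zero => rw [barD_zero, hEps_barDiff]; rfl
  | succ i ih =>
    rw [barD_succ, LinearEquiv.map_eq_zero_iff]
    induction z using BarTerm.induction_on with
    | zero => simp
    | add x y hx hy => rw [map_add, map_add, hx, hy, add_zero]
    | smul_barHomotopy a y =>
      rw [map_smul, map_smul, barDiff_barHomotopy_succ, map_sub, barDiff_barHomotopy, ih,
        TensorProduct.tmul_zero, sub_zero, sub_self, smul_zero]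

lemma exact_barDiff (i : ℕ) : Function.Exact (barDiff ε (i + 1)) (barDiff ε i) := by
  refine fun y => ⟨fun hy => ⟨barHomotopy k A (i + 1) y, ?_⟩, ?_⟩
  · rw [barDiff_barHomotopy_succ, hy, map_zero, sub_zero]
  · rintro ⟨z, rfl⟩
    exact (barTermEquiv k A i).map_eq_zero_iff.1 ((barD_succ ε i _).symm.trans (barD_barDiff ε _ z))

variable [Algebra A k] (hε : ∀ a, algebraMap A k a = ε a)

/-- The augmentation `a ⊗ c ↦ ε(a) c` of the bar resolution. -/
def barAug : BarTerm k A 0 →ₗ[A] k where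
  toFun y := (hEps k A ε 0 y : (hW k A 0 : Type))
  map_add' := map_add _
  map_smul' a y := by
    let c : k := hEps k A ε 0 y
    have hc : ε a * c = a • c := by rw [Algebra.smul_def, hε]
    exact (hEps_smul ε 0 a y).trans hc

lemma barAug_surjective : Function.Surjective (barAug ε hε) := fun c =>
  ⟨1 ⊗ₜ[k] c, (hEps_tmul ε 0 1 c).trans ((congrArg (· * c) (map_one ε)).trans (one_mul c))⟩

lemma exact_barAug : Function.Exact (barDiff ε 0) (barAug ε hε) := by
  refine fun y => ⟨fun hy => ⟨barHomotopy k A 0 y, ?_⟩, ?_⟩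
  · have hy' : hEps k A ε 0 y = 0 := hy
    rw [barDiff_barHomotopy, barD_zero, hy', TensorProduct.tmul_zero, sub_zero]
  · rintro ⟨z, rfl⟩
    exact hEps_barDiff ε 0 z

/-- The bar resolution of `k` over `A`. -/
def barResolution : ProjectiveResolution (ModuleCat.of A k) :=
  projectiveResolutionOfExact (X := BarTerm k A) (barDiff ε) (barAug ε hε)
    (barAug_surjective ε hε) (exact_barAug ε hε) (exact_barDiff ε)

end Bar

section HochschildComplex

variable {k : Type} [Field k] {A : Type} [CommRing A] [Algebra k A] (ε : A →ₐ[k] k)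

lemma hDelta_comp_hDelta (i : ℕ) : hDelta k A ε i ∘ₗ hDelta k A ε (i + 1) = 0 := by
  refine LinearMap.ext fun y => ?_
  obtain ⟨z, rfl⟩ : ∃ z, hEps k A ε (i + 2) z = y :=
    ⟨barHomotopy k A (i + 1) ((barTermEquiv k A (i + 1)).symm y), by simp [hEps_barHomotopy]⟩
  rw [LinearMap.comp_apply, ← hEps_barDiff, ← hEps_barDiff, (exact_barDiff ε i).apply_apply_eq_zero,
    map_zero]
  rfl

/-- The complex `(A^{⊗ •}, δ)` whose homology is `hH`. -/
def hochschildComplex : ChainComplex (ModuleCat k) ℕ :=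
  chainComplexOf (X := fun i => (hW k A i : Type)) (hDelta k A ε) (hDelta_comp_hDelta ε)

lemma hochschildComplex_d (i : ℕ) :
    (hochschildComplex ε).d (i + 1) i = ModuleCat.ofHom (hDelta k A ε i) :=
  chainComplexOf_d (X := fun i => (hW k A i : Type)) _ _ i

/-- `hH k A ε (i + 1)` is the homology of `hochschildComplex ε` in degree `i + 1`. -/
def hochschildComplexHomologyIso (i : ℕ) :
    (hochschildComplex ε).homology (i + 1) ≅ hH k A ε (i + 1) := by
  let S : ShortComplex (ModuleCat k) := .mk (ModuleCat.ofHom (hDelta k A ε (i + 1)))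
    (ModuleCat.ofHom (hDelta k A ε i)) (ofHom_comp_ofHom_eq_zero (hDelta_comp_hDelta ε i))
  let e : (hochschildComplex ε).sc' (i + 2) (i + 1) i ≅ S :=
    ShortComplex.isoMk (Iso.refl _) (Iso.refl _) (Iso.refl _)
      ((Category.id_comp _).trans
        ((hochschildComplex_d ε (i + 1)).symm.trans (Category.comp_id _).symm))
      ((Category.id_comp _).trans
        ((hochschildComplex_d ε i).symm.trans (Category.comp_id _).symm))
  refine (hochschildComplex ε).homologyIsoSc' (i + 2) (i + 1) i (by simp) (by simp) ≪≫
    ShortComplex.homologyMapIso e ≪≫ S.moduleCatHomologyIso ≪≫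
    (Submodule.quotEquivOfEq _ _ ?_).toModuleIso
  exact LinearMap.range_codRestrict _ _ _

lemma rank_hH_zero : Module.rank k (hH k A ε 0 : Type) = 1 := by
  have hδ : LinearMap.range (hDelta k A ε 0) = ⊥ := LinearMap.range_zero
  exact ((Submodule.quotEquivOfEqBot _ hδ).rank_eq).trans (Module.rank_self k)

variable [Algebra A k]

variable (A) in
/-- `k ⊗ -` turns the terms of the bar resolution into those of `hochschildComplex`. -/
def baseChangeBarTermEquiv [IsScalarTower k A k] (i : ℕ) :
    k ⊗[A] BarTerm k A i ≃ₗ[k] (hW k A i : Type) :=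
  AlgebraTensorModule.cancelBaseChange k A k k (hW k A i) ≪≫ₗ TensorProduct.lid k (hW k A i)

variable (hε : ∀ a, algebraMap A k a = ε a)

include hε in
lemma baseChangeBarTermEquiv_tmul [IsScalarTower k A k] (i : ℕ) (c : k) (y : BarTerm k A i) :
    baseChangeBarTermEquiv A i (c ⊗ₜ[A] y) = c • hEps k A ε i y := by
  induction y using TensorProduct.induction_on with
  | zero => simp
  | tmul a x =>
    simp [baseChangeBarTermEquiv, hEps_tmul, Algebra.smul_def, hε, mul_smul, smul_comm (ε a)]
  | add x y hx hy => rw [tmul_add, map_add, hx, hy, map_add, smul_add]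

/-- Base change along `ε` turns the bar resolution into `hochschildComplex`. -/
def baseChangeBarResolutionIso :
    ((baseChangeFunctor A k).mapHomologicalComplex _).obj (barResolution ε hε).complex ≅
      hochschildComplex ε := by
  have := IsScalarTower.of_algebraMap_eq (R := k) (S := A) (A := k) (by simp [hε])
  refine HomologicalComplex.Hom.isoOfComponents
    (fun i => (baseChangeBarTermEquiv A i).toModuleIso) ?_
  rintro _ j rfl
  have hb : (barResolution ε hε).complex.d (j + 1) j = ModuleCat.ofHom (barDiff ε j) :=
    projectiveResolutionOfExact_d (X := BarTerm k A) _ _ _ _ _ j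
  suffices h : hDelta k A ε j ∘ₗ (baseChangeBarTermEquiv A (j + 1)).toLinearMap =
      (baseChangeBarTermEquiv A j).toLinearMap ∘ₗ (barDiff ε j).baseChange k by
    rw [hochschildComplex_d]
    exact (ModuleCat.hom_ext h).trans
      (congrArg (· ≫ _) (congrArg (baseChangeFunctor A k).map hb.symm))
  refine LinearMap.ext fun t => ?_
  induction t using TensorProduct.induction_on with
  | zero => simp only [map_zero]
  | add x y hx hy => rw [map_add, map_add, hx, hy]
  | tmul c y =>
    simp only [LinearMap.comp_apply, LinearEquiv.coe_coe, LinearMap.baseChange_tmul,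
      baseChangeBarTermEquiv_tmul ε hε, map_smul, hEps_barDiff]

include hε in
theorem rank_hH_succ_eq_leftDerived (i : ℕ) :
    Module.rank k (hH k A ε (i + 1) : Type) =
      Module.rank k (((baseChangeFunctor A k).leftDerived (i + 1)).obj (ModuleCat.of A k)) := by
  let e := (barResolution ε hε).isoLeftDerivedObj (baseChangeFunctor A k) (i + 1) ≪≫
    (HomologicalComplex.homologyFunctor _ _ (i + 1)).mapIso (baseChangeBarResolutionIso ε hε) ≪≫
    hochschildComplexHomologyIso ε i
  exact e.toLinearEquiv.rank_eq.symm

end HochschildComplex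

section ExteriorAlgebra

lemma sum_smul_mul_self_eq_zero {R E σ : Type*} [CommRing R] [Ring E] [Algebra R E] {u : σ → E}
    (hsq : ∀ i, u i * u i = 0) (hanti : ∀ i j, u i * u j = -(u j * u i)) (c : σ → R)
    (s : Finset σ) : (∑ i ∈ s, c i • u i) * (∑ i ∈ s, c i • u i) = 0 := by
  classical
  induction s using Finset.induction_on with
  | empty => simp
  | insert a s ha ih =>
    have hcross : u a * (∑ i ∈ s, c i • u i) = -((∑ i ∈ s, c i • u i) * u a) := by
      simp only [Finset.mul_sum, Finset.sum_mul, mul_smul_comm, smul_mul_assoc, hanti a, smul_neg,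
        Finset.sum_neg_distrib]
    rw [Finset.sum_insert ha, add_mul, mul_add, mul_add, ih, smul_mul_smul_comm, hsq,
      smul_mul_assoc, hcross, mul_smul_comm]
    simp

variable {R σ : Type*} [CommRing R] [LinearOrder σ]

variable (R) in
/-- The sign relating `e_i ∧ e_F` to `± e_{F ∪ {i}}` in an exterior algebra whose basis consists
of the increasing products `e_F`. -/
def koszulSign (i : σ) (F : Finset σ) : R :=
  ∏ l ∈ F, if l < i then -1 else 1

lemma koszulSign_mul_self (i : σ) (F : Finset σ) : koszulSign R i F * koszulSign R i F = 1 := by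
  rw [koszulSign, ← Finset.prod_mul_distrib]
  exact Finset.prod_eq_one fun l _ => by split_ifs <;> simp

lemma koszulSign_insert (i : σ) {j : σ} {F : Finset σ} (hj : j ∉ F) :
    koszulSign R i (insert j F) = (if j < i then -1 else 1) * koszulSign R i F :=
  Finset.prod_insert hj

lemma koszulSign_erase (i : σ) {j : σ} {F : Finset σ} (hj : j ∈ F) :
    koszulSign R i (F.erase j) = (if j < i then -1 else 1) * koszulSign R i F := by
  conv_rhs => rw [← Finset.insert_erase hj, koszulSign_insert i (Finset.notMem_erase j F)]
  split_ifs <;> simp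

lemma ite_lt_eq_neg_ite_lt {i j : σ} (hij : i ≠ j) :
    (if i < j then -1 else 1 : R) = -(if j < i then -1 else 1) := by
  rcases hij.lt_or_gt with h | h <;> simp [h, h.not_gt]

variable (R) in
/-- Contraction with the `i`-th coordinate form, on the exterior algebra of `R^σ` written in
coordinates as `Finset σ → R`. -/
def contractBasis (i : σ) : Module.End R (Finset σ → R) where
  toFun z F := if i ∈ F then 0 else koszulSign R i F * z (insert i F)
  map_add' y z := by ext F; split_ifs <;> simp [*, mul_add]
  map_smul' r z := by ext F; split_ifs <;> simp [*, mul_left_comm]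

variable (R) in
/-- Left multiplication by the `i`-th basis vector, on the exterior algebra of `R^σ` written in
coordinates as `Finset σ → R`. -/
def wedgeBasis (i : σ) : Module.End R (Finset σ → R) where
  toFun z F := if i ∈ F then koszulSign R i F * z (F.erase i) else 0
  map_add' y z := by ext F; split_ifs <;> simp [*, mul_add]
  map_smul' r z := by ext F; split_ifs <;> simp [*, mul_left_comm]

lemma contractBasis_apply (i : σ) (z : Finset σ → R) (F : Finset σ) :
    contractBasis R i z F = if i ∈ F then 0 else koszulSign R i F * z (insert i F) := rfl

lemma wedgeBasis_apply (i : σ) (z : Finset σ → R) (F : Finset σ) :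
    wedgeBasis R i z F = if i ∈ F then koszulSign R i F * z (F.erase i) else 0 := rfl

lemma contractBasis_mul_self (i : σ) : contractBasis R i * contractBasis R i = 0 := by
  ext1 z; funext F
  simp [contractBasis_apply]

lemma wedgeBasis_mul_self (i : σ) : wedgeBasis R i * wedgeBasis R i = 0 := by
  ext1 z; funext F
  simp [wedgeBasis_apply]

lemma contractBasis_mul_comm (i j : σ) :
    contractBasis R i * contractBasis R j = -(contractBasis R j * contractBasis R i) := by
  rcases eq_or_ne i j with rfl | hij
  · rw [contractBasis_mul_self, neg_zero]
  ext1 z; funext F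
  by_cases hi : i ∈ F <;> by_cases hj : j ∈ F <;>
    simp only [Module.End.mul_apply, LinearMap.neg_apply, Pi.neg_apply, contractBasis_apply,
      Finset.mem_insert, hi, hj, hij, hij.symm, or_true, or_false, if_true, if_false, mul_zero,
      neg_zero]
  rw [koszulSign_insert j hi, koszulSign_insert i hj, Finset.insert_comm,
    ite_lt_eq_neg_ite_lt hij]
  ring

lemma wedgeBasis_mul_comm (i j : σ) :
    wedgeBasis R i * wedgeBasis R j = -(wedgeBasis R j * wedgeBasis R i) := by
  rcases eq_or_ne i j with rfl | hij
  · rw [wedgeBasis_mul_self, neg_zero]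
  ext1 z; funext F
  by_cases hi : i ∈ F <;> by_cases hj : j ∈ F <;>
    simp only [Module.End.mul_apply, LinearMap.neg_apply, Pi.neg_apply, wedgeBasis_apply,
      Finset.mem_erase, hi, hj, ne_eq, hij, hij.symm, not_false_eq_true, and_self, and_false,
      if_true, if_false, mul_zero, neg_zero]
  rw [koszulSign_erase j hi, koszulSign_erase i hj, Finset.erase_right_comm,
    ite_lt_eq_neg_ite_lt hij]
  ring

lemma contractBasis_mul_wedgeBasis_self (i : σ) :
    contractBasis R i * wedgeBasis R i + wedgeBasis R i * contractBasis R i = 1 := by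
  ext1 z; funext F
  by_cases hi : i ∈ F <;>
    simp [contractBasis_apply, wedgeBasis_apply, hi, koszulSign_insert, koszulSign_erase,
      ← mul_assoc, koszulSign_mul_self]

lemma contractBasis_mul_wedgeBasis_of_ne {i j : σ} (hij : i ≠ j) :
    contractBasis R i * wedgeBasis R j = -(wedgeBasis R j * contractBasis R i) := by
  ext1 z; funext F
  by_cases hi : i ∈ F <;> by_cases hj : j ∈ F <;>
    simp only [Module.End.mul_apply, LinearMap.neg_apply, Pi.neg_apply, wedgeBasis_apply,
      contractBasis_apply, Finset.mem_insert, Finset.mem_erase, hi, hj, ne_eq, hij, hij.symm,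
      not_false_eq_true, and_self, and_false, or_true, or_false, if_true, if_false, mul_zero,
      neg_zero]
  rw [koszulSign_insert j hi, koszulSign_erase i hj, Finset.erase_insert_of_ne hij,
    ite_lt_eq_neg_ite_lt hij]
  ring

variable [Fintype σ]

/-- Contraction with the linear form `∑ x i • e_i^*`, i.e. the Koszul differential of `x`. -/
def contract (x : σ → R) : Module.End R (Finset σ → R) := ∑ i, x i • contractBasis R i

/-- Left multiplication by the vector `∑ c i • e_i`. -/
def wedge (c : σ → R) : Module.End R (Finset σ → R) := ∑ i, c i • wedgeBasis R i

lemma contract_apply_apply (x : σ → R) (z : Finset σ → R) (F : Finset σ) :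
    contract x z F = ∑ i, x i * contractBasis R i z F := by
  simp [contract]

lemma wedge_apply_apply (c : σ → R) (z : Finset σ → R) (F : Finset σ) :
    wedge c z F = ∑ i, c i * wedgeBasis R i z F := by
  simp [wedge]

lemma contract_mul_self (x : σ → R) : contract x * contract x = 0 :=
  sum_smul_mul_self_eq_zero contractBasis_mul_self contractBasis_mul_comm x _

lemma wedge_mul_self (c : σ → R) : wedge c * wedge c = 0 :=
  sum_smul_mul_self_eq_zero wedgeBasis_mul_self wedgeBasis_mul_comm c _

lemma wedge_mul_comm (c c' : σ → R) : wedge c * wedge c' = -(wedge c' * wedge c) := by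
  rw [eq_neg_iff_add_eq_zero]
  have h := wedge_mul_self (c + c')
  have hadd : wedge (c + c') = wedge c + wedge c' := by
    simp [wedge, add_smul, Finset.sum_add_distrib]
  rw [hadd, add_mul, mul_add, mul_add, wedge_mul_self, wedge_mul_self] at h
  simpa using h

lemma contractBasis_mul_contract (i : σ) (x : σ → R) :
    contractBasis R i * contract x = -(contract x * contractBasis R i) := by
  simp only [contract, Finset.mul_sum, Finset.sum_mul, mul_smul_comm, smul_mul_assoc,
    contractBasis_mul_comm i, smul_neg, Finset.sum_neg_distrib]

lemma contract_mul_wedgeBasis (x : σ → R) (i : σ) :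
    contract x * wedgeBasis R i + wedgeBasis R i * contract x = x i • 1 := by
  have h (l : σ) : contractBasis R l * wedgeBasis R i + wedgeBasis R i * contractBasis R l =
      if l = i then 1 else 0 := by
    split_ifs with hl
    · rw [hl, contractBasis_mul_wedgeBasis_self]
    · rw [contractBasis_mul_wedgeBasis_of_ne hl, neg_add_cancel]
  simp only [contract, Finset.mul_sum, Finset.sum_mul, mul_smul_comm, smul_mul_assoc,
    ← Finset.sum_add_distrib, ← smul_add, h, smul_ite, smul_zero]
  simp

open Matrix in
lemma contract_mul_wedge (x c : σ → R) :
    contract x * wedge c + wedge c * contract x = (x ⬝ᵥ c) • 1 := by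
  simp only [wedge, Finset.mul_sum, Finset.sum_mul, mul_smul_comm, smul_mul_assoc,
    ← Finset.sum_add_distrib, ← smul_add, contract_mul_wedgeBasis, smul_smul]
  rw [← Finset.sum_smul, dotProduct_comm]
  rfl

end ExteriorAlgebra

section WeaklyRegularFamily

/-- A finite family is weakly regular if each member is a nonzerodivisor modulo the preceding ones;
this is Mathlib's `RingTheory.Sequence.IsWeaklyRegular`, indexed by a linear order instead of a
list. -/
def IsWeaklyRegularFamily {R ι : Type*} [CommRing R] [Preorder ι] (f : ι → R) : Prop :=
  ∀ i, IsSMulRegular (R ⧸ Ideal.span (f '' Set.Iio i)) (f i)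

lemma IsWeaklyRegularFamily.mem_of_mul_mem {R ι : Type*} [CommRing R] [Preorder ι] {f : ι → R}
    (hf : IsWeaklyRegularFamily f) {i : ι} {r : R}
    (hr : f i * r ∈ Ideal.span (f '' Set.Iio i)) : r ∈ Ideal.span (f '' Set.Iio i) :=
  mem_of_isSMulRegular_quotient_of_smul_mem (hf i) hr

lemma induction_on_initial_segments {ι : Type*} [LinearOrder ι] [Finite ι] {p : Set ι → Prop}
    (empty : p ∅) (step : ∀ i, p (Set.Iio i) → p (Set.Iic i)) : p Set.univ := by
  classical
  have := Fintype.ofFinite ι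
  suffices h : ∀ t : Finset ι, IsLowerSet (t : Set ι) → p t by
    simpa using h Finset.univ (by simpa using isLowerSet_univ)
  intro t
  induction t using Finset.induction_on_max with
  | empty => simpa using fun _ => empty
  | insert a t ha ih =>
    intro ht
    have hIio : (t : Set ι) = Set.Iio a := Set.Subset.antisymm ha fun b hb =>
      Finset.mem_of_mem_insert_of_ne
        (Finset.mem_coe.1 (ht (Set.mem_Iio.1 hb).le (Finset.mem_insert_self a t)))
        (Set.mem_Iio.1 hb).ne
    rw [Finset.coe_insert, hIio, Set.Iio_insert]
    exact step a (hIio ▸ ih (hIio ▸ isLowerSet_Iio a))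

end WeaklyRegularFamily

section Koszul

variable {R σ : Type*} [CommRing R] [LinearOrder σ]

variable (R) in
/-- The exterior algebra of `R^V` inside that of `R^σ`. -/
def exteriorSupported (V : Set σ) : Submodule R (Finset σ → R) :=
  ⨅ i ∈ Vᶜ, LinearMap.ker (contractBasis R i)

lemma mem_exteriorSupported {V : Set σ} {z : Finset σ → R} :
    z ∈ exteriorSupported R V ↔ ∀ i ∉ V, contractBasis R i z = 0 := by
  simp [exteriorSupported]

variable (R σ) in
/-- The unit of the exterior algebra of `R^σ`. -/
def exteriorOne : Finset σ → R := Pi.single ∅ 1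

lemma contractBasis_exteriorOne (i : σ) : contractBasis R i (exteriorOne R σ) = 0 := by
  funext F
  simp [contractBasis_apply, exteriorOne]

lemma contractBasis_contractBasis (i j : σ) (z : Finset σ → R) :
    contractBasis R i (contractBasis R j z) = -contractBasis R j (contractBasis R i z) :=
  LinearMap.congr_fun (contractBasis_mul_comm i j) z

lemma wedgeBasis_mem_exteriorSupported {V : Set σ} {z : Finset σ → R}
    (hz : z ∈ exteriorSupported R V) {i : σ} (hi : i ∈ V) :
    wedgeBasis R i z ∈ exteriorSupported R V := by
  rw [mem_exteriorSupported] at hz ⊢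
  intro l hl
  have h := LinearMap.congr_fun
    (contractBasis_mul_wedgeBasis_of_ne (R := R) (ne_of_mem_of_not_mem hi hl).symm) z
  simpa [hz l hl] using h

lemma contractBasis_mem_exteriorSupported_Iio {i : σ} {z : Finset σ → R}
    (hz : z ∈ exteriorSupported R (Set.Iic i)) :
    contractBasis R i z ∈ exteriorSupported R (Set.Iio i) := by
  rw [mem_exteriorSupported] at hz ⊢
  intro l hl
  rcases (not_lt.1 hl).eq_or_lt with rfl | hil
  · exact LinearMap.congr_fun (contractBasis_mul_self i) z
  · rw [contractBasis_contractBasis, hz l (not_le.2 hil), map_zero, neg_zero]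

lemma sub_wedgeBasis_mem_exteriorSupported_Iio {i : σ} {z : Finset σ → R}
    (hz : z ∈ exteriorSupported R (Set.Iic i)) :
    z - wedgeBasis R i (contractBasis R i z) ∈ exteriorSupported R (Set.Iio i) := by
  have h : z - wedgeBasis R i (contractBasis R i z) = contractBasis R i (wedgeBasis R i z) :=
    sub_eq_of_eq_add (LinearMap.congr_fun (contractBasis_mul_wedgeBasis_self (R := R) i) z).symm
  rw [h]
  exact contractBasis_mem_exteriorSupported_Iio
    (wedgeBasis_mem_exteriorSupported hz (Set.mem_Iic.2 le_rfl))

lemma eq_smul_exteriorOne_of_mem_exteriorSupported_empty {z : Finset σ → R}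
    (hz : z ∈ exteriorSupported R ∅) : z = z ∅ • exteriorOne R σ := by
  rw [mem_exteriorSupported] at hz
  funext F
  rcases F.eq_empty_or_nonempty with rfl | ⟨i, hi⟩
  · simp [exteriorOne]
  · have h := congrFun (hz i (Set.notMem_empty i)) (F.erase i)
    rw [contractBasis_apply, if_neg (Finset.notMem_erase i F), Finset.insert_erase hi] at h
    have hF : z F = 0 := by
      rw [← one_mul (z F), ← koszulSign_mul_self (R := R) i (F.erase i), mul_assoc, h]
      simp
    simp [exteriorOne, hF, Finset.ne_empty_of_mem hi]

lemma exteriorSupported_mono {V W : Set σ} (h : V ⊆ W) :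
    exteriorSupported R V ≤ exteriorSupported R W := fun z hz => by
  rw [mem_exteriorSupported] at hz ⊢
  exact fun i hi => hz i fun hiV => hi (h hiV)

lemma exteriorOne_mem_exteriorSupported (V : Set σ) : exteriorOne R σ ∈ exteriorSupported R V :=
  mem_exteriorSupported.2 fun i _ => contractBasis_exteriorOne i

variable [Fintype σ] (x : σ → R)

lemma contract_exteriorOne : contract x (exteriorOne R σ) = 0 := by
  simp [contract, contractBasis_exteriorOne]

lemma contract_contract (z : Finset σ → R) : contract x (contract x z) = 0 :=
  LinearMap.congr_fun (contract_mul_self x) z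

lemma contractBasis_contract (i : σ) (z : Finset σ → R) :
    contractBasis R i (contract x z) = -contract x (contractBasis R i z) :=
  LinearMap.congr_fun (contractBasis_mul_contract i x) z

lemma contract_wedgeBasis (i : σ) (z : Finset σ → R) :
    contract x (wedgeBasis R i z) = x i • z - wedgeBasis R i (contract x z) :=
  eq_sub_of_add_eq (LinearMap.congr_fun (contract_mul_wedgeBasis x i) z)

lemma contract_apply_empty_mem_span {V : Set σ} {z : Finset σ → R}
    (hz : z ∈ exteriorSupported R V) : contract x z ∅ ∈ Ideal.span (x '' V) := by
  rw [contract_apply_apply]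
  refine sum_mem fun i _ => ?_
  by_cases hi : i ∈ V
  · exact Ideal.mul_mem_right _ _ (Ideal.subset_span (Set.mem_image_of_mem x hi))
  · simp [mem_exteriorSupported.1 hz i hi]

lemma exists_contract_eq_smul_exteriorOne {V : Set σ} {q : R} (hq : q ∈ Ideal.span (x '' V)) :
    ∃ w ∈ exteriorSupported R V, contract x w = q • exteriorOne R σ := by
  suffices h : Ideal.span (x '' V) ≤ ((exteriorSupported R V).map (contract x)).comap
      (LinearMap.toSpanSingleton R _ (exteriorOne R σ)) from h hq
  refine Ideal.span_le.2 ?_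
  rintro _ ⟨i, hi, rfl⟩
  refine ⟨wedgeBasis R i (exteriorOne R σ),
    wedgeBasis_mem_exteriorSupported (exteriorOne_mem_exteriorSupported V) hi, ?_⟩
  rw [contract_wedgeBasis, contract_exteriorOne, map_zero, sub_zero,
    LinearMap.toSpanSingleton_apply]

/-- Exactness, except at `e_∅`, of the Koszul complex of the subfamily `(x i)_{i ∈ V}`. -/
def KoszulExactOn (V : Set σ) : Prop :=
  ∀ z ∈ exteriorSupported R V, contract x z = 0 →
    ∃ w ∈ exteriorSupported R V, ∃ q : R, z = contract x w + q • exteriorOne R σ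

variable {x}

lemma KoszulExactOn.exists_contractBasis_eq_contract (hx : IsWeaklyRegularFamily x) {i : σ}
    (ih : KoszulExactOn x (Set.Iio i)) {z : Finset σ → R}
    (hz : z ∈ exteriorSupported R (Set.Iic i)) (hdz : contract x z = 0) :
    ∃ w ∈ exteriorSupported R (Set.Iio i), contractBasis R i z = contract x w := by
  obtain ⟨u, hu, q, huq⟩ := ih _ (contractBasis_mem_exteriorSupported_Iio hz)
    (by rw [← neg_eq_zero, ← contractBasis_contract, hdz, map_zero])
  set y := z - wedgeBasis R i (contractBasis R i z) + x i • u with hy_def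
  have hy : y ∈ exteriorSupported R (Set.Iio i) :=
    add_mem (sub_wedgeBasis_mem_exteriorSupported_Iio hz) (Submodule.smul_mem _ _ hu)
  have hdy : contract x y = (-(x i * q)) • exteriorOne R σ := by
    rw [hy_def, map_add, map_sub, map_smul, contract_wedgeBasis, hdz, huq, map_add, map_add,
      contract_contract, map_smul, map_smul, contract_exteriorOne, map_zero]
    module
  have hq : q ∈ Ideal.span (x '' Set.Iio i) := by
    refine hx.mem_of_mul_mem (neg_mem_iff.1 ?_)
    simpa [-neg_mem_iff, hdy, exteriorOne] using contract_apply_empty_mem_span x hy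
  obtain ⟨w, hw, hwq⟩ := exists_contract_eq_smul_exteriorOne x hq
  exact ⟨u + w, add_mem hu hw, by rw [huq, map_add, hwq]⟩

lemma KoszulExactOn.Iic_of_Iio (hx : IsWeaklyRegularFamily x) {i : σ}
    (ih : KoszulExactOn x (Set.Iio i)) : KoszulExactOn x (Set.Iic i) := by
  intro z hz hdz
  obtain ⟨w, hw, hzw⟩ := ih.exists_contractBasis_eq_contract hx hz hdz
  have hsub := exteriorSupported_mono (R := R) (Set.Iio_subset_Iic_self (a := i))
  obtain ⟨v, hv, q, hvq⟩ := ih (z - wedgeBasis R i (contractBasis R i z) + x i • w)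
    (add_mem (sub_wedgeBasis_mem_exteriorSupported_Iio hz) (Submodule.smul_mem _ _ hw))
    (by rw [hzw, map_add, map_sub, hdz, contract_wedgeBasis, contract_contract, map_zero,
      map_smul]; abel)
  refine ⟨v - wedgeBasis R i w, sub_mem (hsub hv)
    (wedgeBasis_mem_exteriorSupported (hsub hw) (Set.mem_Iic.2 le_rfl)), q, ?_⟩
  rw [map_sub, contract_wedgeBasis, ← hzw, sub_add_eq_add_sub, ← hvq]
  abel

theorem koszulExactOn_univ (hx : IsWeaklyRegularFamily x) : KoszulExactOn x Set.univ := by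
  refine induction_on_initial_segments ?_ fun i => KoszulExactOn.Iic_of_Iio hx
  exact fun z hz _ => ⟨0, zero_mem _, z ∅, by
    simpa using eq_smul_exteriorOne_of_mem_exteriorSupported_empty hz⟩

end Koszul

section Tate

variable {R σ τ : Type*} [CommRing R]

variable (R σ) in
/-- Division by the `j`-th divided power variable `y_j`, i.e. `y^(a + e_j) ↦ y^(a)`. -/
def dividedLower (j : τ) : Module.End R ((τ →₀ ℕ) → Finset σ → R) :=
  LinearMap.funLeft R (Finset σ → R) (· + Finsupp.single j 1)

variable (R σ) in
/-- The section `y^(a) ↦ y^(a + e_j)` of `dividedLower j`. -/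
def dividedRaise (j : τ) : Module.End R ((τ →₀ ℕ) → Finset σ → R) where
  toFun z a := if a j = 0 then 0 else z (a - Finsupp.single j 1)
  map_add' y z := by funext a; dsimp only [Pi.add_apply]; split_ifs <;> simp
  map_smul' r z := by funext a; dsimp only [Pi.smul_apply]; split_ifs <;> simp

lemma dividedLower_apply (j : τ) (z : (τ →₀ ℕ) → Finset σ → R) (a : τ →₀ ℕ) :
    dividedLower R σ j z a = z (a + Finsupp.single j 1) := rfl

lemma dividedRaise_apply (j : τ) (z : (τ →₀ ℕ) → Finset σ → R) (a : τ →₀ ℕ) :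
    dividedRaise R σ j z a = if a j = 0 then 0 else z (a - Finsupp.single j 1) := rfl

lemma dividedLower_comm (j l : τ) (z : (τ →₀ ℕ) → Finset σ → R) :
    dividedLower R σ j (dividedLower R σ l z) = dividedLower R σ l (dividedLower R σ j z) := by
  funext a
  simp only [dividedLower_apply, add_right_comm]

lemma dividedLower_dividedRaise_self (j : τ) (z : (τ →₀ ℕ) → Finset σ → R) :
    dividedLower R σ j (dividedRaise R σ j z) = z := by
  funext a
  simp [dividedLower_apply, dividedRaise_apply]

lemma dividedLower_dividedRaise_of_ne {j l : τ} (hlj : l ≠ j) (z : (τ →₀ ℕ) → Finset σ → R) :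
    dividedLower R σ l (dividedRaise R σ j z) = dividedRaise R σ j (dividedLower R σ l z) := by
  funext a
  simp only [dividedLower_apply, dividedRaise_apply, Finsupp.add_apply,
    Finsupp.single_eq_of_ne hlj.symm, add_zero]
  split_ifs with ha
  · rfl
  · rw [tsub_add_eq_add_tsub]
    exact Finsupp.single_le_iff.2 (Nat.one_le_iff_ne_zero.2 ha)

variable [LinearOrder σ] [Fintype σ]

/-- The operator `y^(a + e_j) ↦ v ∧ y^(a)`, a summand of the Tate differential. -/
def tateWedge (v : σ → R) (j : τ) : Module.End R ((τ →₀ ℕ) → Finset σ → R) :=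
  (wedge v).compLeft (τ →₀ ℕ) * dividedLower R σ j

variable (x : σ → R)

lemma contract_compLeft_mul_self :
    (contract x).compLeft (τ →₀ ℕ) * (contract x).compLeft (τ →₀ ℕ) = 0 := by
  ext1 z; funext a
  exact contract_contract x (z a)

lemma tateWedge_mul_self (v : σ → R) (j : τ) : tateWedge v j * tateWedge v j = 0 := by
  ext1 z; funext a
  exact LinearMap.congr_fun (wedge_mul_self v) _

lemma tateWedge_mul_comm (u v : σ → R) (j l : τ) :
    tateWedge u j * tateWedge v l = -(tateWedge v l * tateWedge u j) := by
  ext1 z; funext a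
  refine (LinearMap.congr_fun (wedge_mul_comm u v) _).trans ?_
  simp [tateWedge, dividedLower_apply, add_right_comm]

open Matrix in
lemma contract_compLeft_mul_tateWedge (v : σ → R) (j : τ) :
    (contract x).compLeft (τ →₀ ℕ) * tateWedge v j + tateWedge v j * (contract x).compLeft _ =
      (x ⬝ᵥ v) • dividedLower R σ j := by
  ext1 z; funext a
  exact LinearMap.congr_fun (contract_mul_wedge x v) _

variable [Fintype τ]

/-- The differential of the Tate complex: on the tensor product of the exterior algebra on `e_i`
with the divided power algebra on `y_j`, it maps `e_i` to `x i` and `y_j^(m)` to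
`(∑ i, c j i • e_i) y_j^(m - 1)`. -/
def tateD (c : τ → σ → R) : Module.End R ((τ →₀ ℕ) → Finset σ → R) :=
  (contract x).compLeft (τ →₀ ℕ) + ∑ j, tateWedge (c j) j

variable (c : τ → σ → R)

lemma tateD_apply (z : (τ →₀ ℕ) → Finset σ → R) (a : τ →₀ ℕ) :
    tateD x c z a = contract x (z a) + ∑ j, wedge (c j) (z (a + Finsupp.single j 1)) := by
  simp [tateD, tateWedge, dividedLower_apply]

open Matrix in
theorem tateD_mul_self : tateD x c * tateD x c = ∑ j, (x ⬝ᵥ c j) • dividedLower R σ j := by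
  have hW : (∑ j, tateWedge (c j) j) * (∑ j, tateWedge (c j) j) = 0 := by
    simpa using sum_smul_mul_self_eq_zero (R := R) (u := fun j => tateWedge (c j) j)
      (fun j => tateWedge_mul_self (c j) j) (fun j l => tateWedge_mul_comm _ _ j l) 1 Finset.univ
  rw [tateD, add_mul, mul_add, mul_add, contract_compLeft_mul_self, hW, zero_add, add_zero,
    Finset.mul_sum, Finset.sum_mul, ← Finset.sum_add_distrib]
  exact Finset.sum_congr rfl fun j _ => contract_compLeft_mul_tateWedge x (c j) j

lemma dividedLower_tateD (j : τ) (z : (τ →₀ ℕ) → Finset σ → R) :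
    dividedLower R σ j (tateD x c z) = tateD x c (dividedLower R σ j z) := by
  funext a
  simp only [dividedLower_apply, tateD_apply, add_right_comm]

end Tate

section Map

variable {R S σ τ : Type*} [CommRing R] [CommRing S] [LinearOrder σ] (φ : R →+* S)

lemma map_koszulSign (i : σ) (F : Finset σ) : φ (koszulSign R i F) = koszulSign S i F := by
  simp [koszulSign, map_prod, apply_ite φ]

variable [Fintype σ]

lemma contract_map (x : σ → R) (z : Finset σ → R) (F : Finset σ) :
    contract (fun i => φ (x i)) (fun G => φ (z G)) F = φ (contract x z F) := by
  simp [contract_apply_apply, contractBasis_apply, apply_ite φ, map_koszulSign]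

lemma wedge_map (c : σ → R) (z : Finset σ → R) (F : Finset σ) :
    wedge (fun i => φ (c i)) (fun G => φ (z G)) F = φ (wedge c z F) := by
  simp [wedge_apply_apply, wedgeBasis_apply, map_koszulSign]

variable [Fintype τ]

lemma tateD_map (x : σ → R) (c : τ → σ → R) (z : (τ →₀ ℕ) → Finset σ → R) (a : τ →₀ ℕ)
    (F : Finset σ) :
    tateD (fun i => φ (x i)) (fun j i => φ (c j i)) (fun b G => φ (z b G)) a F =
      φ (tateD x c z a F) := by
  simp [tateD_apply, contract_map, wedge_map]

end Map

section TateExact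

open Matrix

variable {R σ τ : Type*} [CommRing R]

variable (σ τ) in
/-- The elements of the Tate complex all of whose coefficients lie in `I`. -/
def coeffIn (I : Ideal R) : Submodule R ((τ →₀ ℕ) → Finset σ → R) :=
  Submodule.pi Set.univ fun _ => Submodule.pi Set.univ fun _ => I

lemma mem_coeffIn {I : Ideal R} {z : (τ →₀ ℕ) → Finset σ → R} :
    z ∈ coeffIn σ τ I ↔ ∀ a F, z a F ∈ I := by
  simp [coeffIn, Submodule.mem_pi]

lemma coeffIn_mono {I I' : Ideal R} (h : I ≤ I') : coeffIn σ τ I ≤ coeffIn σ τ I' := fun z hz => by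
  rw [mem_coeffIn] at hz ⊢
  exact fun a F => h (hz a F)

lemma smul_mem_coeffIn {I : Ideal R} {r : R} (hr : r ∈ I) (z : (τ →₀ ℕ) → Finset σ → R) :
    r • z ∈ coeffIn σ τ I :=
  mem_coeffIn.2 fun _ _ => I.mul_mem_right _ hr

lemma dividedRaise_mem_coeffIn {I : Ideal R} {z : (τ →₀ ℕ) → Finset σ → R}
    (hz : z ∈ coeffIn σ τ I) (j : τ) : dividedRaise R σ j z ∈ coeffIn σ τ I := by
  rw [mem_coeffIn] at hz ⊢
  intro a F
  rw [dividedRaise_apply]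
  split_ifs
  · exact I.zero_mem
  · exact hz _ F

lemma IsWeaklyRegularFamily.mem_coeffIn_of_smul_mem [Preorder τ] {f : τ → R}
    (hf : IsWeaklyRegularFamily f) {j : τ} {z : (τ →₀ ℕ) → Finset σ → R}
    (hz : f j • z ∈ coeffIn σ τ (Ideal.span (f '' Set.Iio j))) :
    z ∈ coeffIn σ τ (Ideal.span (f '' Set.Iio j)) :=
  mem_coeffIn.2 fun a F => hf.mem_of_mul_mem (mem_coeffIn.1 hz a F)

variable (R σ) in
/-- The part of the Tate complex involving only the divided power variables `y_j` with `j ∈ J`. -/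
def tateSupported (J : Set τ) : Submodule R ((τ →₀ ℕ) → Finset σ → R) :=
  ⨅ j ∈ Jᶜ, LinearMap.ker (dividedLower R σ j)

lemma mem_tateSupported {J : Set τ} {z : (τ →₀ ℕ) → Finset σ → R} :
    z ∈ tateSupported R σ J ↔ ∀ j ∉ J, dividedLower R σ j z = 0 := by
  simp [tateSupported]

lemma dividedRaise_mem_tateSupported {J : Set τ} {z : (τ →₀ ℕ) → Finset σ → R}
    (hz : z ∈ tateSupported R σ J) {j : τ} (hj : j ∈ J) :
    dividedRaise R σ j z ∈ tateSupported R σ J := by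
  rw [mem_tateSupported] at hz ⊢
  intro l hl
  rw [dividedLower_dividedRaise_of_ne (ne_of_mem_of_not_mem hj hl).symm, hz l hl, map_zero]

lemma tateSupported_mono {J J' : Set τ} (h : J ⊆ J') :
    tateSupported R σ J ≤ tateSupported R σ J' := fun z hz => by
  rw [mem_tateSupported] at hz ⊢
  exact fun j hj => hz j fun hjJ => hj (h hjJ)

lemma sub_dividedRaise_mem_tateSupported_Iio [LinearOrder τ] {j : τ}
    {z : (τ →₀ ℕ) → Finset σ → R} (hz : z ∈ tateSupported R σ (Set.Iic j)) :
    z - dividedRaise R σ j (dividedLower R σ j z) ∈ tateSupported R σ (Set.Iio j) := by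
  rw [mem_tateSupported] at hz ⊢
  intro l hl
  rcases (not_lt.1 hl).eq_or_lt with rfl | hjl
  · rw [map_sub, dividedLower_dividedRaise_self, sub_self]
  · rw [map_sub, dividedLower_dividedRaise_of_ne hjl.ne', dividedLower_comm l j,
      hz l (not_le.2 hjl), map_zero, map_zero, sub_zero]

lemma exists_sub_smul_mem_coeffIn {J : Set τ} {I : Ideal R} {r : R}
    {z : (τ →₀ ℕ) → Finset σ → R} (hzJ : z ∈ tateSupported R σ J)
    (hz : z ∈ coeffIn σ τ (Ideal.span {r} ⊔ I)) :
    ∃ w ∈ tateSupported R σ J, z - r • w ∈ coeffIn σ τ I := by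
  have hex (q : R) (hq : q ∈ Ideal.span {r} ⊔ I) : ∃ p, (q = 0 → p = 0) ∧ q - r * p ∈ I := by
    rcases eq_or_ne q 0 with rfl | hq0
    · exact ⟨0, by simp⟩
    · obtain ⟨p, b, hb, rfl⟩ := Ideal.mem_span_singleton_sup.1 hq
      exact ⟨p, fun h => absurd h hq0, by rwa [mul_comm, add_sub_cancel_left]⟩
  choose w hw0 hw using fun a F => hex (z a F) (mem_coeffIn.1 hz a F)
  refine ⟨w, mem_tateSupported.2 fun j hj => ?_, mem_coeffIn.2 hw⟩
  funext a F
  exact hw0 _ _ (congrFun (congrFun (mem_tateSupported.1 hzJ j hj) a) F)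

variable [LinearOrder σ] [Fintype τ]

variable (R σ τ) in
/-- The unit of the Tate algebra. -/
def tateOne : (τ →₀ ℕ) → Finset σ → R := Pi.single 0 (exteriorOne R σ)

variable [Fintype σ] {x : σ → R} {c : τ → σ → R}

lemma tateD_mem_tateSupported {J : Set τ} {z : (τ →₀ ℕ) → Finset σ → R}
    (hz : z ∈ tateSupported R σ J) : tateD x c z ∈ tateSupported R σ J := by
  rw [mem_tateSupported] at hz ⊢
  exact fun j hj => by rw [dividedLower_tateD, hz j hj, map_zero]

lemma tateD_mem_coeffIn {I : Ideal R} {z : (τ →₀ ℕ) → Finset σ → R} (hz : z ∈ coeffIn σ τ I) :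
    tateD x c z ∈ coeffIn σ τ I := by
  have hz' : (fun a F => Ideal.Quotient.mk I (z a F)) = 0 := by
    funext a F
    exact Ideal.Quotient.eq_zero_iff_mem.2 (mem_coeffIn.1 hz a F)
  refine mem_coeffIn.2 fun a F => Ideal.Quotient.eq_zero_iff_mem.1 ?_
  rw [← tateD_map, hz', map_zero, Pi.zero_apply, Pi.zero_apply]

lemma tateD_single_zero (w : Finset σ → R) :
    tateD x c (Pi.single 0 w) = Pi.single 0 (contract x w) := by
  funext a
  have ha (j : τ) : a + Finsupp.single j 1 ≠ 0 := by simp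
  rcases eq_or_ne a 0 with rfl | ha0
  · simp [tateD_apply]
  · simp [tateD_apply, ha0]

lemma tateD_tateD_sub_smul_dividedLower_mem_coeffIn [LinearOrder τ] {j : τ}
    {z : (τ →₀ ℕ) → Finset σ → R} (hz : z ∈ tateSupported R σ (Set.Iic j)) :
    tateD x c (tateD x c z) - (x ⬝ᵥ c j) • dividedLower R σ j z ∈
      coeffIn σ τ (Ideal.span ((fun l => x ⬝ᵥ c l) '' Set.Iio j)) := by
  have h : tateD x c (tateD x c z) = ∑ l, (x ⬝ᵥ c l) • dividedLower R σ l z := by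
    simpa using LinearMap.congr_fun (tateD_mul_self x c) z
  rw [h, ← Finset.add_sum_erase _ _ (Finset.mem_univ j), add_sub_cancel_left]
  refine sum_mem fun l hl => ?_
  rcases (Finset.ne_of_mem_erase hl).lt_or_gt with hlj | hjl
  · have hmem : x ⬝ᵥ c l ∈ Ideal.span ((fun l => x ⬝ᵥ c l) '' Set.Iio j) :=
      Ideal.subset_span (Set.mem_image_of_mem (fun l => x ⬝ᵥ c l) hlj)
    exact smul_mem_coeffIn hmem _
  · rw [mem_tateSupported.1 hz l (not_le.2 hjl), smul_zero]
    exact zero_mem _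

variable (x c) in
/-- Exactness, except at the unit, of the Tate complex with variables `y_j` for `j ∈ J`, modulo the
ideal generated by the elements `x ⬝ᵥ c j` for `j ∈ J`. -/
def TateExactOn (J : Set τ) : Prop :=
  ∀ z ∈ tateSupported R σ J,
    tateD x c z ∈ coeffIn σ τ (Ideal.span ((fun j => x ⬝ᵥ c j) '' J)) →
      ∃ u ∈ tateSupported R σ J, ∃ q : R, z - tateD x c u - q • tateOne R σ τ ∈
        coeffIn σ τ (Ideal.span ((fun j => x ⬝ᵥ c j) '' J))

lemma KoszulExactOn.tateExactOn_empty (hx : KoszulExactOn x Set.univ) : TateExactOn x c ∅ := by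
  intro z hz hdz
  have hz0 : z = Pi.single 0 (z 0) := by
    funext a
    rcases eq_or_ne a 0 with rfl | ha
    · simp
    · obtain ⟨j, hj⟩ := Finsupp.ne_iff.1 ha
      have h := congrFun (mem_tateSupported.1 hz j (Set.notMem_empty j)) (a - Finsupp.single j 1)
      rw [dividedLower_apply, tsub_add_cancel_of_le
        (Finsupp.single_le_iff.2 (Nat.one_le_iff_ne_zero.2 hj))] at h
      simpa [ha] using h
  have hd0 : contract x (z 0) = 0 := by
    funext F
    have h := mem_coeffIn.1 hdz 0 F
    rw [hz0, tateD_single_zero] at h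
    simpa using h
  obtain ⟨w, -, q, hw⟩ := hx (z 0) (by simp [mem_exteriorSupported]) hd0
  refine ⟨Pi.single 0 w, mem_tateSupported.2 fun j _ => ?_, q, ?_⟩
  · funext a
    simp [dividedLower_apply]
  · suffices h : z - tateD x c (Pi.single 0 w) - q • tateOne R σ τ = 0 from h ▸ zero_mem _
    rw [hz0, hw, tateD_single_zero, tateOne, Pi.single_add, Pi.single_smul]
    simp

lemma TateExactOn.Iic_of_Iio [LinearOrder τ] (hf : IsWeaklyRegularFamily fun j => x ⬝ᵥ c j) {j : τ}
    (ih : TateExactOn x c (Set.Iio j)) : TateExactOn x c (Set.Iic j) := by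
  set f : τ → R := fun j => x ⬝ᵥ c j
  set I := Ideal.span (f '' Set.Iio j)
  have hI : Ideal.span (f '' Set.Iic j) = Ideal.span {f j} ⊔ I := by
    rw [← Set.Iio_insert, Set.image_insert_eq, Ideal.span_insert]
  intro z hz hdz
  obtain ⟨w, hw, hzw⟩ := exists_sub_smul_mem_coeffIn (tateD_mem_tateSupported hz) (hI ▸ hdz)
  have hlow : dividedLower R σ j z - tateD x c w ∈ coeffIn σ τ I := by
    refine hf.mem_coeffIn_of_smul_mem ?_
    convert sub_mem (tateD_mem_coeffIn (x := x) (c := c) hzw)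
      (tateD_tateD_sub_smul_dividedLower_mem_coeffIn hz) using 1
    rw [map_sub, map_smul]
    module
  set z' := z - tateD x c (dividedRaise R σ j w) with hz'_def
  have hw' := dividedRaise_mem_tateSupported hw (Set.mem_Iic.2 (le_refl j))
  have hz' : z' ∈ tateSupported R σ (Set.Iic j) := sub_mem hz (tateD_mem_tateSupported hw')
  have hdz' : tateD x c z' ∈ coeffIn σ τ I := by
    convert sub_mem hzw
      (tateD_tateD_sub_smul_dividedLower_mem_coeffIn (x := x) (c := c) hw') using 1
    rw [hz'_def, map_sub, dividedLower_dividedRaise_self]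
    abel
  have hlow' : dividedRaise R σ j (dividedLower R σ j z') ∈ coeffIn σ τ I := by
    refine dividedRaise_mem_coeffIn ?_ j
    rwa [hz'_def, map_sub, dividedLower_tateD, dividedLower_dividedRaise_self]
  obtain ⟨u, hu, q, hq⟩ := ih _ (sub_dividedRaise_mem_tateSupported_Iio hz')
    (by rw [map_sub]; exact sub_mem hdz' (tateD_mem_coeffIn hlow'))
  refine ⟨dividedRaise R σ j w + u,
    add_mem hw' (tateSupported_mono Set.Iio_subset_Iic_self hu), q, ?_⟩
  refine coeffIn_mono (Ideal.span_mono (Set.image_mono Set.Iio_subset_Iic_self)) ?_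
  convert add_mem hq hlow' using 1
  rw [map_add, hz'_def]
  abel

theorem tateExactOn_univ [LinearOrder τ] (hx : IsWeaklyRegularFamily x)
    (hf : IsWeaklyRegularFamily fun j => x ⬝ᵥ c j) : TateExactOn x c Set.univ :=
  induction_on_initial_segments (koszulExactOn_univ hx).tateExactOn_empty
    fun _ => TateExactOn.Iic_of_Iio hf

end TateExact

section Graded

/-- The basis `e_F y^(a)` of the homogeneous part of degree `q` of the Tate algebra, in which `e_i`
has degree one and `y_j` has degree two. -/
abbrev TateIndex (σ τ : Type*) (q : ℕ) : Type _ :=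
  {p : (τ →₀ ℕ) × Finset σ // p.2.card + 2 * p.1.degree = q}

variable {R σ τ : Type*} [CommRing R]

variable (R σ τ) in
/-- The projection of the Tate algebra to its homogeneous part of degree `q`. -/
def tateRestrict (q : ℕ) : ((τ →₀ ℕ) → Finset σ → R) →ₗ[R] (TateIndex σ τ q → R) where
  toFun z p := z p.1.1 p.1.2
  map_add' _ _ := rfl
  map_smul' _ _ := rfl

variable (R σ τ) in
/-- The inclusion of the homogeneous part of degree `q` into the Tate algebra. -/
def tateExtend (q : ℕ) : (TateIndex σ τ q → R) →ₗ[R] ((τ →₀ ℕ) → Finset σ → R) where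
  toFun v a F := if h : F.card + 2 * a.degree = q then v ⟨(a, F), h⟩ else 0
  map_add' v w := by funext a F; dsimp only [Pi.add_apply]; split_ifs <;> simp
  map_smul' r v := by funext a F; dsimp only [Pi.smul_apply]; split_ifs <;> simp

variable (R σ τ) in
/-- The projector of the Tate algebra onto its homogeneous part of degree `q`. -/
def homogeneousPart (q : ℕ) : Module.End R ((τ →₀ ℕ) → Finset σ → R) :=
  tateExtend R σ τ q ∘ₗ tateRestrict R σ τ q

lemma tateExtend_tateRestrict (q : ℕ) (z : (τ →₀ ℕ) → Finset σ → R) :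
    tateExtend R σ τ q (tateRestrict R σ τ q z) = homogeneousPart R σ τ q z := rfl

lemma tateRestrict_tateExtend (q : ℕ) (v : TateIndex σ τ q → R) :
    tateRestrict R σ τ q (tateExtend R σ τ q v) = v :=
  funext fun p => dif_pos p.2

lemma homogeneousPart_tateExtend (q : ℕ) (v : TateIndex σ τ q → R) :
    homogeneousPart R σ τ q (tateExtend R σ τ q v) = tateExtend R σ τ q v :=
  congrArg (tateExtend R σ τ q) (tateRestrict_tateExtend q v)

lemma tateRestrict_homogeneousPart (q : ℕ) (z : (τ →₀ ℕ) → Finset σ → R) :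
    tateRestrict R σ τ q (homogeneousPart R σ τ q z) = tateRestrict R σ τ q z :=
  tateRestrict_tateExtend q _

lemma homogeneousPart_apply (q : ℕ) (z : (τ →₀ ℕ) → Finset σ → R) (a : τ →₀ ℕ) (F : Finset σ) :
    homogeneousPart R σ τ q z a F = if F.card + 2 * a.degree = q then z a F else 0 := rfl

/-- The index of the unit in the Tate algebra. -/
def TateIndex.zero (σ τ : Type*) : TateIndex σ τ 0 := ⟨(0, ∅), by simp⟩

variable [LinearOrder σ]

lemma tateRestrict_succ_tateOne [Fintype τ] (q : ℕ) :
    tateRestrict R σ τ (q + 1) (tateOne R σ τ) = 0 := by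
  funext ⟨⟨a, F⟩, h⟩
  rcases eq_or_ne a 0 with rfl | ha
  · rcases F.eq_empty_or_nonempty with rfl | hF
    · simp at h
    · simp [tateRestrict, tateOne, exteriorOne, hF.ne_empty]
  · simp [tateRestrict, tateOne, ha]

lemma tateExtend_zero [Fintype τ] (v : TateIndex σ τ 0 → R) :
    tateExtend R σ τ 0 v = v (TateIndex.zero σ τ) • tateOne R σ τ := by
  funext a F
  have hdeg : F.card + 2 * a.degree = 0 ↔ a = 0 ∧ F = ∅ := by
    simp [Finsupp.degree_eq_zero_iff, and_comm]
  by_cases h : a = 0 ∧ F = ∅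
  · obtain ⟨rfl, rfl⟩ := h
    simp [tateExtend, TateIndex.zero, tateOne, exteriorOne]
  · rw [tateExtend, LinearMap.coe_mk, AddHom.coe_mk, dif_neg (hdeg.not.2 h)]
    rcases eq_or_ne a 0 with rfl | ha
    · simp [tateOne, exteriorOne, show F ≠ ∅ from fun hF => h ⟨rfl, hF⟩]
    · simp [tateOne, ha]

variable [Fintype σ] (x : σ → R)

lemma contract_homogeneousPart_succ (q : ℕ) (z : (τ →₀ ℕ) → Finset σ → R) (a : τ →₀ ℕ)
    (F : Finset σ) :
    contract x (homogeneousPart R σ τ (q + 1) z a) F =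
      if F.card + 2 * a.degree = q then contract x (z a) F else 0 := by
  have hterm (i : σ) : contractBasis R i (homogeneousPart R σ τ (q + 1) z a) F =
      if F.card + 2 * a.degree = q then contractBasis R i (z a) F else 0 := by
    by_cases hi : i ∈ F
    · simp [contractBasis_apply, hi]
    · simp [contractBasis_apply, homogeneousPart_apply, hi, add_right_comm _ 1]
  simp only [contract_apply_apply, hterm]
  split_ifs <;> simp

lemma wedge_homogeneousPart_succ (v : σ → R) (q : ℕ) (z : (τ →₀ ℕ) → Finset σ → R) (a : τ →₀ ℕ)
    (j : τ) (F : Finset σ) :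
    wedge v (homogeneousPart R σ τ (q + 1) z (a + Finsupp.single j 1)) F =
      if F.card + 2 * a.degree = q then wedge v (z (a + Finsupp.single j 1)) F else 0 := by
  have hterm (i : σ) :
      wedgeBasis R i (homogeneousPart R σ τ (q + 1) z (a + Finsupp.single j 1)) F =
        if F.card + 2 * a.degree = q then wedgeBasis R i (z (a + Finsupp.single j 1)) F
        else 0 := by
    by_cases hi : i ∈ F
    · have hdeg : (F.erase i).card + 2 * (a + Finsupp.single j 1).degree = q + 1 ↔
          F.card + 2 * a.degree = q := by
        rw [← Finset.card_erase_add_one hi, map_add, Finsupp.degree_single]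
        lia
      simp only [wedgeBasis_apply, homogeneousPart_apply, hi, hdeg, if_true, mul_ite, mul_zero]
    · simp [wedgeBasis_apply, hi]
  simp only [wedge_apply_apply, hterm]
  split_ifs <;> simp

variable [Fintype τ] (c : τ → σ → R)

lemma tateD_homogeneousPart_succ (q : ℕ) (z : (τ →₀ ℕ) → Finset σ → R) :
    tateD x c (homogeneousPart R σ τ (q + 1) z) = homogeneousPart R σ τ q (tateD x c z) := by
  funext a F
  rw [homogeneousPart_apply]
  simp only [tateD_apply, Pi.add_apply, Finset.sum_apply, contract_homogeneousPart_succ,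
    wedge_homogeneousPart_succ]
  split_ifs <;> simp

/-- The component of degree `q + 1` of the Tate differential. -/
def tateDiff (q : ℕ) : (TateIndex σ τ (q + 1) → R) →ₗ[R] (TateIndex σ τ q → R) :=
  tateRestrict R σ τ q ∘ₗ tateD x c ∘ₗ tateExtend R σ τ (q + 1)

lemma tateExtend_tateDiff (q : ℕ) (v : TateIndex σ τ (q + 1) → R) :
    tateExtend R σ τ q (tateDiff x c q v) = tateD x c (tateExtend R σ τ (q + 1) v) := by
  rw [tateDiff, LinearMap.comp_apply, LinearMap.comp_apply, tateExtend_tateRestrict,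
    ← tateD_homogeneousPart_succ, homogeneousPart_tateExtend]

lemma tateDiff_tateRestrict (q : ℕ) (z : (τ →₀ ℕ) → Finset σ → R) :
    tateDiff x c q (tateRestrict R σ τ (q + 1) z) = tateRestrict R σ τ q (tateD x c z) := by
  rw [tateDiff, LinearMap.comp_apply, LinearMap.comp_apply, tateExtend_tateRestrict,
    tateD_homogeneousPart_succ, tateRestrict_homogeneousPart]

end Graded

section Counting

variable (σ τ : Type*) [Fintype σ] [Fintype τ]

/-- The elements of `TateIndex σ τ q` as a finite set, arranged by the number `m` of divided power
variables counted with multiplicity. -/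
def tateIndexFinset [DecidableEq σ] [DecidableEq τ] (q : ℕ) : Finset ((τ →₀ ℕ) × Finset σ) :=
  (Finset.range (q / 2 + 1)).biUnion fun m =>
    Finset.finsuppAntidiag Finset.univ m ×ˢ Finset.powersetCard (q - 2 * m) Finset.univ

variable {σ τ} in
lemma mem_tateIndexFinset [DecidableEq σ] [DecidableEq τ] {q : ℕ} {p : (τ →₀ ℕ) × Finset σ} :
    p ∈ tateIndexFinset σ τ q ↔ p.2.card + 2 * p.1.degree = q := by
  have hp : Finset.univ.sum p.1 = p.1.degree := (Finsupp.degree_eq_sum p.1).symm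
  simp only [tateIndexFinset, Finset.mem_biUnion, Finset.mem_range, Finset.mem_product,
    Finset.mem_finsuppAntidiag, Finset.mem_powersetCard, Finset.subset_univ, true_and, and_true, hp]
  constructor
  · rintro ⟨m, hm, hdeg, hcard⟩
    lia
  · exact fun h => ⟨p.1.degree, by lia, rfl, by lia⟩

instance TateIndex.finite (σ τ : Type*) [Finite σ] [Finite τ] (q : ℕ) :
    Finite (TateIndex σ τ q) := by
  classical
  have := Fintype.ofFinite σ
  have := Fintype.ofFinite τ
  exact Finite.of_equiv {p // p ∈ tateIndexFinset σ τ q}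
    (Equiv.subtypeEquivRight fun _ => mem_tateIndexFinset)

lemma card_tateIndex (q : ℕ) :
    Nat.card (TateIndex σ τ q) = ∑ m ∈ Finset.range (q / 2 + 1),
      (Fintype.card σ).choose (q - 2 * m) * (Fintype.card τ).multichoose m := by
  classical
  rw [← Nat.card_congr (Equiv.subtypeEquivRight fun _ => mem_tateIndexFinset),
    Nat.card_eq_fintype_card, Fintype.card_coe, tateIndexFinset, Finset.card_biUnion]
  · simp [Finset.card_finsuppAntidiag_nat_eq_multichoose, mul_comm]
  · intro m _ m' _ hm
    refine Finset.disjoint_left.2 fun p hp hp' => hm ?_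
    simp only [Finset.mem_product, Finset.mem_finsuppAntidiag] at hp hp'
    exact hp.1.1.symm.trans hp'.1.1

end Counting

section TateResolution

open Matrix

variable {R A σ τ : Type*} [CommRing R] [CommRing A] [LinearOrder σ] [Fintype σ] [Fintype τ]

lemma tateD_apply_mem {x : σ → A} {c : τ → σ → A} {I : Ideal A} (hx : ∀ i, x i ∈ I)
    (hc : ∀ j i, c j i ∈ I) (z : (τ →₀ ℕ) → Finset σ → A) (a : τ →₀ ℕ) (F : Finset σ) :
    tateD x c z a F ∈ I := by
  simp only [tateD_apply, Pi.add_apply, Finset.sum_apply, contract_apply_apply, wedge_apply_apply]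
  exact add_mem (sum_mem fun i _ => I.mul_mem_right _ (hx i))
    (sum_mem fun j _ => sum_mem fun i _ => I.mul_mem_right _ (hc j i))

/-- Exactness of the Tate complex except at the unit. -/
def TateExact (x : σ → A) (c : τ → σ → A) : Prop :=
  ∀ z, tateD x c z = 0 → ∃ u, ∃ r : A, z = tateD x c u + r • tateOne A σ τ

lemma TateExactOn.map {x : σ → R} {c : τ → σ → R} (h : TateExactOn x c Set.univ) {φ : R →+* A}
    (hφ : Function.Surjective φ) (hker : RingHom.ker φ = Ideal.span (Set.range fun j => x ⬝ᵥ c j)) :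
    TateExact (fun i => φ (x i)) (fun j i => φ (c j i)) := by
  intro z hz
  choose y hy using fun a F => hφ (z a F)
  obtain rfl : (fun a F => φ (y a F)) = z := funext₂ hy
  obtain ⟨u, -, r, hu⟩ := h y (by simp [mem_tateSupported]) (mem_coeffIn.2 fun a F => by
    rw [Set.image_univ, ← hker, RingHom.mem_ker, ← tateD_map, hz]; rfl)
  refine ⟨fun a F => φ (u a F), φ r, funext₂ fun a F => ?_⟩
  have haF := mem_coeffIn.1 hu a F
  rw [Set.image_univ, ← hker, RingHom.mem_ker] at haF
  have hone : φ (tateOne R σ τ a F) = tateOne A σ τ a F := by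
    rcases eq_or_ne a 0 with rfl | ha
    · simp [tateOne, exteriorOne, Pi.single_apply, apply_ite φ]
    · simp [tateOne, ha]
  simpa [tateD_map, hone, sub_sub, sub_eq_zero] using haF

variable {x : σ → A} {c : τ → σ → A}

lemma tateD_tateD_eq_zero (hxc : ∀ j, x ⬝ᵥ c j = 0) (z : (τ →₀ ℕ) → Finset σ → A) :
    tateD x c (tateD x c z) = 0 := by
  rw [← Module.End.mul_apply, tateD_mul_self]
  simp [hxc]

lemma TateExact.exact_tateDiff_succ (h : TateExact x c) (hxc : ∀ j, x ⬝ᵥ c j = 0) (q : ℕ) :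
    Function.Exact (tateDiff x c (q + 1)) (tateDiff x c q) := by
  intro v
  constructor
  · intro hv
    obtain ⟨u, r, hu⟩ := h (tateExtend A σ τ (q + 1) v)
      (by rw [← tateExtend_tateDiff, hv, map_zero])
    refine ⟨tateRestrict A σ τ (q + 2) u, ?_⟩
    rw [tateDiff_tateRestrict, ← tateRestrict_tateExtend (q + 1) v, hu, map_add, map_smul,
      tateRestrict_succ_tateOne, smul_zero, add_zero]
  · rintro ⟨w, rfl⟩
    rw [tateDiff, LinearMap.comp_apply, LinearMap.comp_apply, tateExtend_tateDiff,
      tateD_tateD_eq_zero hxc, map_zero]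

lemma tateDiff_zero_apply_zero_mem (w : TateIndex σ τ 1 → A) :
    tateDiff x c 0 w (TateIndex.zero σ τ) ∈ Ideal.span (Set.range x) := by
  suffices h : tateD x c (tateExtend A σ τ 1 w) 0 ∅ ∈ Ideal.span (Set.range x) from h
  have hx (i : σ) : x i ∈ Ideal.span (Set.range x) := Ideal.subset_span (Set.mem_range_self i)
  simpa [tateD_apply, contract_apply_apply, wedge_apply_apply, wedgeBasis_apply] using
    sum_mem fun i _ => Ideal.mul_mem_right _ _ (hx i)

lemma exact_tateDiff_zero {Z : Type*} [AddCommGroup Z] [Module A Z] {π : A →ₗ[A] Z}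
    (hπ : LinearMap.ker π = Ideal.span (Set.range x)) :
    Function.Exact (tateDiff x c 0) (π ∘ₗ LinearMap.proj (TateIndex.zero σ τ)) := by
  intro v
  rw [LinearMap.comp_apply, LinearMap.proj_apply, ← LinearMap.mem_ker, hπ]
  constructor
  · intro hv
    obtain ⟨w, -, hw⟩ := exists_contract_eq_smul_exteriorOne x (V := Set.univ)
      (by rwa [Set.image_univ])
    refine ⟨tateRestrict A σ τ 1 (Pi.single 0 w), ?_⟩
    rw [tateDiff_tateRestrict, tateD_single_zero, hw, Pi.single_smul, ← tateOne, ← tateExtend_zero,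
      tateRestrict_tateExtend]
  · rintro ⟨w, rfl⟩
    exact tateDiff_zero_apply_zero_mem w

end TateResolution

section MinimalTateResolution

open Matrix

universe u

lemma exists_dotProduct_eq_of_mem_span_pow_two {R σ : Type*} [CommRing R] [Fintype σ] {x : σ → R}
    {r : R} (hr : r ∈ Ideal.span (Set.range x) ^ 2) :
    ∃ c : σ → R, (∀ i, c i ∈ Ideal.span (Set.range x)) ∧ x ⬝ᵥ c = r := by
  rw [pow_two, ← smul_eq_mul] at hr
  obtain ⟨c, hc, h⟩ := (Submodule.mem_ideal_smul_span_iff_exists_sum _ x r).1 hr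
  refine ⟨c, hc, ?_⟩
  rw [← h, Finsupp.sum_fintype _ _ (by simp), dotProduct]
  simp [mul_comm]

theorem rank_leftDerived_baseChangeFunctor_of_tateExact {A k σ τ : Type u} [CommRing A]
    [CommRing k] [Nontrivial k] [Algebra A k] [LinearOrder σ] [Fintype σ] [Fintype τ] {x : σ → A}
    {c : τ → σ → A} (hk : Function.Surjective (algebraMap A k))
    (hker : RingHom.ker (algebraMap A k) = Ideal.span (Set.range x))
    (hc : ∀ j i, c j i ∈ Ideal.span (Set.range x)) (hxc : ∀ j, x ⬝ᵥ c j = 0)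
    (hexact : TateExact x c) (i : ℕ) :
    Module.rank k (((baseChangeFunctor A k).leftDerived i).obj (ModuleCat.of A k)) =
      Nat.card (TateIndex σ τ i) := by
  have hx (i : σ) : x i ∈ Ideal.span (Set.range x) := Ideal.subset_span (Set.mem_range_self i)
  refine rank_leftDerived_baseChangeFunctor_of_minimal k
    (hk.comp (Function.surjective_eval (TateIndex.zero σ τ)))
    (exact_tateDiff_zero (π := Algebra.linearMap A k) hker)
    (hexact.exact_tateDiff_succ hxc) (fun q z p => ?_) i
  rw [← RingHom.mem_ker, hker]
  exact tateD_apply_mem hx hc _ _ _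

end MinimalTateResolution

section MonomialIdeals

open MvPolynomial

lemma isWeaklyRegularFamily_monomial (R : Type*) {σ ι : Type*} [CommRing R] [Preorder ι]
    {α : ι → σ →₀ ℕ} (hα : Pairwise fun j j' => Disjoint (α j).support (α j').support) :
    IsWeaklyRegularFamily fun j => monomial (α j) (1 : R) := by
  intro j
  rw [isSMulRegular_quotient_iff_mem_of_smul_mem,
    ← Set.image_image (fun s => monomial s (1 : R)) α]
  simp only [smul_eq_mul, mem_ideal_span_monomial_image, Set.exists_mem_image]
  intro p hp e he
  obtain ⟨l, hl, hle⟩ := hp (α j + e) (by simpa [coeff_monomial_mul] using he)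
  refine ⟨l, hl, fun i => ?_⟩
  by_cases hi : α l i = 0
  · simp [hi]
  · have hji : α j i = 0 := Finsupp.notMem_support_iff.1
      (Finset.disjoint_left.1 (hα hl.ne) (Finsupp.mem_support_iff.2 hi))
    simpa [hji] using hle i

lemma isWeaklyRegularFamily_X (R σ : Type*) [CommRing R] [Preorder σ] :
    IsWeaklyRegularFamily (X : σ → MvPolynomial σ R) :=
  isWeaklyRegularFamily_monomial R fun i i' h => by
    classical
    simpa [Finsupp.support_single] using h

lemma ker_aeval_zero (R σ : Type*) [CommRing R] :
    RingHom.ker (aeval fun _ : σ => (0 : R)) = idealOfVars σ R := by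
  ext p
  rw [← pow_one (idealOfVars σ R), mem_pow_idealOfVars_iff', RingHom.mem_ker, aeval_zero']
  simp [constantCoeff_eq, Finsupp.degree_eq_zero_iff]

lemma ker_ciAug {k : Type} [Field k] {n s : ℕ} {α : Fin s → (Fin n →₀ ℕ)}
    (hdeg : ∀ j, 2 ≤ (α j).sum fun _ e => e) :
    RingHom.ker (ciAug k n s α hdeg) =
      Ideal.map (Ideal.Quotient.mk (ciIdeal k n s α)) (idealOfVars (Fin n) k) := by
  rw [← ker_aeval_zero]
  exact Ideal.ker_quotient_lift _ _

end MonomialIdeals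

end MonomialCI

open MonomialCI in
theorem complete_intersection_hochschild_homology_rank_general {k : Type} [Field k] {A : Type}
    [CommRing A] [Algebra k A] {ε : A →ₐ[k] k} {R : Type*} [CommRing R]
    {σ τ : Type} [LinearOrder σ] [Fintype σ] [LinearOrder τ] [Fintype τ] {x : σ → R} {f : τ → R}
    {π : R →+* A}
    (hx : IsWeaklyRegularFamily x) (hf : IsWeaklyRegularFamily f)
    (hfx : ∀ j, f j ∈ Ideal.span (Set.range x) ^ 2) (hπ : Function.Surjective π)
    (hker : RingHom.ker π = Ideal.span (Set.range f))
    (hε : RingHom.ker ε = Ideal.map π (Ideal.span (Set.range x))) (i : ℕ) :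
    Module.rank k (hH k A ε i) = (∑ m ∈ Finset.range (i / 2 + 1),
      (Fintype.card σ).choose (i - 2 * m) * (Fintype.card τ).multichoose m : ℕ) := by
  let : Algebra A k := ε.toRingHom.toAlgebra
  choose c hcx hc using fun j => exists_dotProduct_eq_of_mem_span_pow_two (hfx j)
  obtain rfl : (fun j => dotProduct x (c j)) = f := funext hc
  have hspan : Ideal.map π (Ideal.span (Set.range x)) = Ideal.span (Set.range (π ∘ x)) := by
    rw [Ideal.map_span, Set.range_comp]
  have hxc (j : τ) : dotProduct (π ∘ x) (π ∘ c j) = 0 := by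
    rw [← RingHom.map_dotProduct, ← RingHom.mem_ker, hker]
    exact Ideal.subset_span (Set.mem_range_self j)
  cases i with
  | zero => simp [rank_hH_zero]
  | succ i =>
    rw [rank_hH_succ_eq_leftDerived ε (fun _ => rfl), ← card_tateIndex]
    exact rank_leftDerived_baseChangeFunctor_of_tateExact
      (fun r => ⟨algebraMap k A r, ε.commutes r⟩) (hε.trans hspan)
      (fun j i => hspan ▸ Ideal.mem_map_of_mem π (hcx j i)) hxc
      ((tateExactOn_univ hx hf).map hπ hker) (i + 1)

/-- Let `m_j = x^{α j}`, `j = 1, …, s`, be monomials of total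
degree `≥ 2` with pairwise disjoint supports, and `A = k[x_1, …, x_n]/(m_1, …, m_s)`.
For every `i ≥ 0`,
`dim_k Tor_i^{A ⊗ A}(k, A) = ∑_{r+2m=i, r,m ≥ 0} binom(n,r)·binom(s+m-1,m)`,
where `A` is an `A ⊗ A`-module via multiplication, `k` is an `A ⊗ A`-module via the
augmentation sending each `x_i ⊗ 1` and `1 ⊗ x_i` to `0`, and the Tor group is
realized as the `i`-th homology of the standard complex `(A^{⊗ •}, δ)` computing the
Hochschild homology of `A` with coefficients in `k`.  (Equivalently, the Hilbert
series `∑ dim_k Tor_i^{A ⊗ A}(k,A) tⁱ` equals `(1+t)^n/(1-t²)^s`.) -/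
theorem complete_intersection_hochschild_homology_rank (k : Type) [Field k] (n s : ℕ)
    (hn : 1 ≤ n) (hs : 1 ≤ s) (α : Fin s → (Fin n →₀ ℕ))
    (hdeg : ∀ j, 2 ≤ (α j).sum fun _ e => e)
    (hdisj : ∀ j j' : Fin s, j ≠ j' → Disjoint (α j).support (α j').support) :
    ∀ i : ℕ,
      Module.rank k (hH k (CIQuot k n s α) (ciAug k n s α hdeg) i : Type) =
        ((∑ m ∈ Finset.range (i / 2 + 1),
            n.choose (i - 2 * m) * (s + m - 1).choose m : ℕ) : Cardinal) := by
  intro i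
  simpa only [Fintype.card_fin, Nat.multichoose_eq] using
    complete_intersection_hochschild_homology_rank_general (A := CIQuot k n s α)
      (MonomialCI.isWeaklyRegularFamily_X k (Fin n))
      (MonomialCI.isWeaklyRegularFamily_monomial k hdisj)
      (fun j => (MvPolynomial.monomial_mem_pow_idealOfVars_iff 2 (α j) one_ne_zero).2 (hdeg j))
      Ideal.Quotient.mk_surjective Ideal.mk_ker (MonomialCI.ker_ciAug hdeg) i

end
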